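/- Let q be an even prime power with q ≥ 2048, and let K be a complete k-cap in PG(4, q) with k ≥ q³ − 2q² + 3q√q + 8q − 9√q − 6. Then no plane of PG(4, q) meets K in exactly q points. -/

import Mathlib

open Module

/-- Points of the projective space `PG(n, q)` over the field `F` (with `q = |F|`). -/
abbrev PGPoint (F : Type*) [Field F] (n : ℕ) := Projectivization F (Fin (n + 1) → F)

/-- The set of projective points lying in the projective subspace determined by
a linear subspace `W`. -/
def ptsIn {F : Type*} [Field F] {n : ℕ} (W : Submodule F (Fin (n + 1) → F)) :
    Set (PGPoint F n) := {P | P.submodule ≤ W}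

/-- Three points of `PG(n, q)` are collinear if they lie on a common line. -/
def Coll3 {F : Type*} [Field F] {n : ℕ} (P₁ P₂ P₃ : PGPoint F n) : Prop :=
  Module.finrank F ↥(P₁.submodule ⊔ P₂.submodule ⊔ P₃.submodule) ≤ 2

/-- A cap (a plane arc when `n = 2`): a set of points no three of which are collinear. -/
def IsCap {F : Type*} [Field F] {n : ℕ} (K : Set (PGPoint F n)) : Prop :=
  ∀ P₁ ∈ K, ∀ P₂ ∈ K, ∀ P₃ ∈ K, P₁ ≠ P₂ → P₁ ≠ P₃ → P₂ ≠ P₃ → ¬ Coll3 P₁ P₂ P₃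

/-- A complete cap: a cap that is not contained in a cap with one more point. -/
def IsCompleteCap {F : Type*} [Field F] {n : ℕ} (K : Set (PGPoint F n)) : Prop :=
  IsCap K ∧ ∀ P ∉ K, ¬ IsCap (insert P K)

/-- A tangent line of `K`: a line (2-dimensional linear subspace) meeting `K`
in exactly one point. -/
def IsTangent {F : Type*} [Field F] {n : ℕ} (K : Set (PGPoint F n))
    (W : Submodule F (Fin (n + 1) → F)) : Prop :=
  Module.finrank F W = 2 ∧ (ptsIn W ∩ K).ncard = 1

namespace CapAux

section Brackets

variable {F : Type*} [Field F] {M : Type*} [DecidableEq M]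

/-- Lagrange-type identity for products of `t` linear forms evaluated on `t + 2` points
of a projective line, in characteristic two. -/
lemma lagr [CharP F 2] (br : M → M → F) (hs : ∀ x y, br x y = br y x)
    (hp : ∀ r x y z, br r x * br y z + br r y * br x z + br r z * br x y = 0)
    (R : Multiset M) : ∀ E : Finset M, E.card = R.card + 2 →
    (∀ x ∈ E, ∀ y ∈ E, x ≠ y → br x y ≠ 0) →
    ∑ x ∈ E, (R.map (fun r => br r x)).prod / ∏ m ∈ E.erase x, br x m = 0 := by
  induction R using Multiset.induction_on with
  | empty =>
    intro E hE hne
    simp only [Multiset.card_zero, zero_add] at hE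
    obtain ⟨x, y, hxy, rfl⟩ := Finset.card_eq_two.1 hE
    rw [Finset.sum_pair hxy]
    have h1 : ({x, y} : Finset M).erase x = {y} := by
      ext z; simp; grind
    have h2 : ({x, y} : Finset M).erase y = {x} := by
      ext z; simp; grind
    rw [h1, h2]
    simp only [Multiset.map_zero, Multiset.prod_zero, Finset.prod_singleton]
    rw [hs y x]
    exact CharTwo.add_self_eq_zero _
  | cons r R ih =>
    intro E hE hne
    rw [Multiset.card_cons] at hE
    obtain ⟨u, hu, v, hv, huv⟩ := Finset.one_lt_card.1 (show 1 < E.card by omega)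
    have iu := ih (E.erase u) (by rw [Finset.card_erase_of_mem hu]; omega)
      (fun x hx y hy => hne x (Finset.mem_of_mem_erase hx) y (Finset.mem_of_mem_erase hy))
    have iv := ih (E.erase v) (by rw [Finset.card_erase_of_mem hv]; omega)
      (fun x hx y hy => hne x (Finset.mem_of_mem_erase hx) y (Finset.mem_of_mem_erase hy))
    have huu : ∀ x, br x x = br x x + br x x + br x x := by
      intro x; rw [CharTwo.add_self_eq_zero, zero_add]
    have hself : ∀ w ∈ E, br w w = 0 := by
      intro w hw
      obtain ⟨w', hw', hww⟩ : ∃ w' ∈ E, w ≠ w' := by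
        by_cases h : w = u
        · exact ⟨v, hv, by rw [h]; exact huv⟩
        · exact ⟨u, hu, h⟩
      have := hp w w w w'
      rw [CharTwo.add_self_eq_zero, zero_add] at this
      have h2 := hne w hw w' hw' hww
      rcases mul_eq_zero.1 this with h | h
      · exact absurd h h2
      · exact h
    -- the key step for each of the two erased points
    have key : ∀ w ∈ E, ∑ x ∈ E, br w x * ((R.map (fun r => br r x)).prod /
        ∏ m ∈ E.erase x, br x m) =
        ∑ x ∈ E.erase w, (R.map (fun r => br r x)).prod / ∏ m ∈ (E.erase w).erase x, br x m := by
      intro w hw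
      rw [← Finset.add_sum_erase _ _ hw, hself w hw, zero_mul, zero_add]
      refine Finset.sum_congr rfl fun x hx => ?_
      have hxw : x ≠ w := Finset.ne_of_mem_erase hx
      have hxE := Finset.mem_of_mem_erase hx
      have hwx : w ∈ E.erase x := Finset.mem_erase.2 ⟨hxw.symm, hw⟩
      rw [← Finset.mul_prod_erase _ _ hwx, Finset.erase_right_comm, hs w x]
      have := hne x hxE w hw hxw
      field_simp
    have huvn := hne u hu v hv huv
    have hr : ∀ x, br r x = (br r v / br u v) * br u x + (br r u / br u v) * br v x := by
      intro x
      have := hp r x u v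
      field_simp
      have h3 : br r x * br u v = br r u * br x v + br r v * br x u := by
        rw [← CharTwo.add_eq_zero, ← add_assoc]; exact this
      rw [h3, hs x v, hs x u]; ring
    have : ∀ x ∈ E, ((r ::ₘ R).map (fun r => br r x)).prod / ∏ m ∈ E.erase x, br x m =
        (br r v / br u v) * (br u x * ((R.map (fun r => br r x)).prod / ∏ m ∈ E.erase x, br x m))
        + (br r u / br u v) * (br v x * ((R.map (fun r => br r x)).prod /
          ∏ m ∈ E.erase x, br x m)) := by
      intro x _
      rw [Multiset.map_cons, Multiset.prod_cons, hr x]; ring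
    rw [Finset.sum_congr rfl this, Finset.sum_add_distrib, ← Finset.mul_sum, ← Finset.mul_sum,
      key u hu, key v hv, iu, iv]
    simp

variable [Fintype F]

lemma ratio_inj [CharP F 2] (br : M → M → F) (hs : ∀ x y, br x y = br y x)
    (hp : ∀ r x y z, br r x * br y z + br r y * br x z + br r z * br x y = 0)
    (S : Finset M) (hS : ∀ x ∈ S, ∀ y ∈ S, x ≠ y → br x y ≠ 0)
    {s s' : M} (h : s ∈ S) (h' : s' ∈ S) (hss : s ≠ s') :
    Set.InjOn (fun p => br s p / br s' p) ((S.erase s).erase s' : Finset M) := by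
  intro p hp1 p' hp2 heq
  simp only [Finset.coe_erase, Set.mem_sdiff, Finset.mem_coe, Set.mem_singleton_iff] at hp1 hp2
  by_contra hne
  have n1 := hS s' h' p hp1.1.1 (Ne.symm hp1.2)
  have n2 := hS s' h' p' hp2.1.1 (Ne.symm hp2.2)
  have n3 := hS p hp1.1.1 p' hp2.1.1 hne
  have n4 := hS s h s' h' hss
  simp only at heq
  rw [div_eq_div_iff n1 n2] at heq
  have h5 := hp s p p' s'
  rw [hs p' s', hs p s', heq, CharTwo.add_self_eq_zero, zero_add] at h5
  exact (mul_ne_zero n4 n3) h5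

lemma card_le_of_br [CharP F 2] (br : M → M → F) (hs : ∀ x y, br x y = br y x)
    (hp : ∀ r x y z, br r x * br y z + br r y * br x z + br r z * br x y = 0)
    (S : Finset M) (hS : ∀ x ∈ S, ∀ y ∈ S, x ≠ y → br x y ≠ 0) :
    S.card ≤ Fintype.card F + 1 := by
  classical
  by_contra hc
  push Not at hc
  have : 1 < Fintype.card F := Fintype.one_lt_card
  obtain ⟨s, h, s', h', hss⟩ := Finset.one_lt_card.1 (show 1 < S.card by omega)
  have h1 := Finset.card_le_card_of_injOn (s := (S.erase s).erase s')
    (t := (Finset.univ : Finset F).erase 0) (fun p => br s p / br s' p) (by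
      intro p hp1
      simp only [Finset.coe_erase, Set.mem_sdiff, Finset.mem_coe, Set.mem_singleton_iff] at hp1
      simp only [Finset.coe_erase, Set.mem_sdiff, Finset.mem_coe, Set.mem_singleton_iff,
        Finset.mem_univ, true_and]
      exact div_ne_zero (hS s h p hp1.1.1 (Ne.symm hp1.1.2))
        (hS s' h' p hp1.1.1 (Ne.symm hp1.2)))
    (ratio_inj br hs hp S hS h h' hss)
  rw [Finset.card_erase_of_mem (Finset.mem_erase.2 ⟨hss.symm, h'⟩), Finset.card_erase_of_mem h,
    Finset.card_erase_of_mem (Finset.mem_univ _), Finset.card_univ] at h1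
  omega

lemma prod_const [CharP F 2] (br : M → M → F) (hs : ∀ x y, br x y = br y x)
    (hp : ∀ r x y z, br r x * br y z + br r y * br x z + br r z * br x y = 0)
    (S : Finset M) (hS : ∀ x ∈ S, ∀ y ∈ S, x ≠ y → br x y ≠ 0)
    (hcard : S.card = Fintype.card F + 1) {s s' : M} (h : s ∈ S) (h' : s' ∈ S) :
    ∏ p ∈ S.erase s, br s p = ∏ p ∈ S.erase s', br s' p := by
  classical
  by_cases hss : s = s'
  · rw [hss]
  have m1 : s' ∈ S.erase s := Finset.mem_erase.2 ⟨Ne.symm hss, h'⟩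
  have m2 : s ∈ S.erase s' := Finset.mem_erase.2 ⟨hss, h⟩
  rw [← Finset.mul_prod_erase _ _ m1, ← Finset.mul_prod_erase _ _ m2, hs s' s,
    Finset.erase_right_comm (a := s')]
  congr 1
  have inj := ratio_inj br hs hp S hS h h' hss
  have him : ((S.erase s).erase s').image (fun p => br s p / br s' p) =
      (Finset.univ : Finset F).erase 0 := by
    apply Finset.eq_of_subset_of_card_le
    · intro c hc
      obtain ⟨p, hp1, rfl⟩ := Finset.mem_image.1 hc
      simp only [Finset.mem_erase] at hp1
      exact Finset.mem_erase.2 ⟨div_ne_zero (hS s h p hp1.2.2 (Ne.symm hp1.2.1))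
        (hS s' h' p hp1.2.2 (Ne.symm hp1.1)), Finset.mem_univ _⟩
    · rw [Finset.card_image_of_injOn inj, Finset.card_erase_of_mem m1, Finset.card_erase_of_mem h,
        Finset.card_erase_of_mem (Finset.mem_univ _), Finset.card_univ]
      omega
  have hprod : ∏ p ∈ (S.erase s).erase s', br s p / br s' p = 1 := by
    have e1 := Finset.prod_image (f := fun c : F => c) inj
    rw [← e1, him]
    have e2 := FiniteField.prod_univ_units_id_eq_neg_one (K := F)
    have e3 : ∏ c ∈ (Finset.univ : Finset F).erase 0, c = ((∏ x : Fˣ, x : Fˣ) : F) := by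
      rw [Units.coe_prod]
      symm
      refine Finset.prod_bij (fun (x : Fˣ) _ => (x : F)) ?_ ?_ ?_ ?_
      · intro x _; simp
      · intro x _ y _ hxy; exact Units.ext hxy
      · intro c hc
        exact ⟨Units.mk0 c (Finset.ne_of_mem_erase hc), Finset.mem_univ _, rfl⟩
      · intros; rfl
    rw [e3, e2]
    simp [CharTwo.neg_eq]
  rw [Finset.prod_div_distrib, div_eq_one_iff_eq] at hprod
  · exact hprod
  · refine Finset.prod_ne_zero_iff.2 fun p hp1 => ?_
    simp only [Finset.mem_erase] at hp1
    exact hS s' h' p hp1.2.2 (Ne.symm hp1.1)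

end Brackets

section Vec

variable {F : Type*} [Field F] [Fintype F]

/-- The determinant of three vectors. -/
def det3 (x y z : Fin 3 → F) : F :=
  x 0 * (y 1 * z 2 - y 2 * z 1) - x 1 * (y 0 * z 2 - y 2 * z 0) + x 2 * (y 0 * z 1 - y 1 * z 0)

lemma det3_swap12 [CharP F 2] (x y z : Fin 3 → F) : det3 x y z = det3 y x z := by
  have : det3 x y z = - det3 y x z := by simp only [det3]; ring
  rw [this, CharTwo.neg_eq]

lemma det3_swap23 [CharP F 2] (x y z : Fin 3 → F) : det3 x y z = det3 x z y := by
  have : det3 x y z = - det3 x z y := by simp only [det3]; ring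
  rw [this, CharTwo.neg_eq]

lemma det3_pl [CharP F 2] (a r x y z : Fin 3 → F) :
    det3 a r x * det3 a y z + det3 a r y * det3 a x z + det3 a r z * det3 a x y = 0 := by
  have : det3 a r x * det3 a y z - det3 a r y * det3 a x z + det3 a r z * det3 a x y = 0 := by
    simp only [det3]; ring
  rw [CharTwo.sub_eq_add] at this
  exact this

lemma det3_self (a x : Fin 3 → F) : det3 a x x = 0 := by simp only [det3]; ring

lemma extend_one [CharP F 2] (a : Fin 3 → F) (S : Finset (Fin 3 → F))
    (hS : ∀ x ∈ S, ∀ y ∈ S, x ≠ y → det3 a x y ≠ 0) (h2 : 2 ≤ S.card)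
    (hc : S.card ≤ Fintype.card F) :
    ∃ y, y ∉ S ∧ ∀ x ∈ S, det3 a x y ≠ 0 := by
  classical
  obtain ⟨s, h, s', h', hss⟩ := Finset.one_lt_card.1 (show 1 < S.card by omega)
  have hn := hS s h s' h' hss
  by_contra hcon
  push Not at hcon
  have hz : ∀ y, ∃ x ∈ S, det3 a x y = 0 := by
    intro y
    by_cases hy : y ∈ S
    · exact ⟨y, hy, det3_self a y⟩
    · exact hcon y hy
  let g : Option F → (Fin 3 → F) := fun o => match o with
    | none => s'
    | some c => s + c • s'
  choose φ hφS hφ using hz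
  have hinj : Function.Injective (fun o : Option F => (⟨φ (g o), hφS _⟩ : S)) := by
    intro o o' hoo
    simp only [Subtype.mk.injEq] at hoo
    by_contra hne
    -- the point x kills two independent vectors, hence is degenerate
    set x := φ (g o) with hx
    have k1 : det3 a x (g o) = 0 := hφ _
    have k2 : det3 a x (g o') = 0 := by rw [hoo]; exact hφ _
    have lin : ∀ c, det3 a x (s + c • s') = det3 a x s + c * det3 a x s' := by
      intro c; simp only [det3, Pi.add_apply, Pi.smul_apply, smul_eq_mul]; ring
    have k3 : det3 a x s = 0 ∧ det3 a x s' = 0 := by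
      rcases o with _ | c <;> rcases o' with _ | c'
      · exact absurd rfl hne
      · simp only [g] at k1 k2
        rw [lin, k1, mul_zero, add_zero] at k2; exact ⟨k2, k1⟩
      · simp only [g] at k1 k2
        rw [lin, k2, mul_zero, add_zero] at k1; exact ⟨k1, k2⟩
      · simp only [g] at k1 k2
        rw [lin] at k1 k2
        have hcc : c - c' ≠ 0 := sub_ne_zero.2 (fun h => hne (by rw [h]))
        have : (c - c') * det3 a x s' = 0 := by linear_combination k1 - k2
        have k4 : det3 a x s' = 0 := (mul_eq_zero.1 this).resolve_left hcc
        rw [k4, mul_zero, add_zero] at k1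
        exact ⟨k1, k4⟩
    have hxS : x ∈ S := hφS _
    by_cases hxs : x = s
    · rw [hxs] at k3; exact hn k3.2
    · exact hS x hxS s h hxs k3.1
  have := Fintype.card_le_of_injective _ hinj
  simp only [Fintype.card_option, Fintype.card_coe] at this
  omega

lemma extend_full [CharP F 2] (a : Fin 3 → F) (n : ℕ) : ∀ (S : Finset (Fin 3 → F)),
    (∀ x ∈ S, ∀ y ∈ S, x ≠ y → det3 a x y ≠ 0) → 2 ≤ S.card →
    S.card + n = Fintype.card F + 1 →
    ∃ S', S ⊆ S' ∧ S'.card = Fintype.card F + 1 ∧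
      (∀ x ∈ S', ∀ y ∈ S', x ≠ y → det3 a x y ≠ 0) := by
  classical
  induction n with
  | zero => intro S hS _ hc; exact ⟨S, subset_rfl, hc, hS⟩
  | succ n ih =>
    intro S hS h2 hc
    obtain ⟨y, hy, hyS⟩ := extend_one a S hS h2 (by omega)
    obtain ⟨S', h1, h3, h4⟩ := ih (insert y S) (by
      intro u hu v hv huv
      rcases Finset.mem_insert.1 hu with hu' | hu' <;>
        rcases Finset.mem_insert.1 hv with hv' | hv'
      · exact absurd (hu'.trans hv'.symm) huv
      · rw [det3_swap23, hu']; exact hyS v hv'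
      · rw [hv']; exact hyS u hu'
      · exact hS u hu' v hv' huv) (by rw [Finset.card_insert_of_notMem hy]; omega)
      (by rw [Finset.card_insert_of_notMem hy]; omega)
    exact ⟨S', (Finset.subset_insert _ _).trans h1, h3, h4⟩

/-- Segre: if `N` lies on a bisecant of the plane arc `K`, then at most `q + 2 - |K|` tangents
of `K` pass through `N`. Vector version. -/
theorem segre_vec [CharP F 2] (K : Finset (Fin 3 → F))
    (hK : ∀ x ∈ K, ∀ y ∈ K, ∀ z ∈ K, x ≠ y → x ≠ z → y ≠ z → det3 x y z ≠ 0)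
    (N A B : Fin 3 → F) (hA : A ∈ K) (hB : B ∈ K) (hAB : A ≠ B) (hN : det3 A B N = 0)
    (J : Finset (Fin 3 → F)) (hJK : J ⊆ K)
    (hJ : ∀ x ∈ J, ∀ y ∈ K, y ≠ x → det3 x y N ≠ 0) :
    K.card + J.card ≤ Fintype.card F + 2 := by
  classical
  by_contra hcon
  push Not at hcon
  set q := Fintype.card F with hq
  have hKa : ∀ a ∈ K, ∀ x ∈ K.erase a, ∀ y ∈ K.erase a, x ≠ y → det3 a x y ≠ 0 := by
    intro a ha x hx y hy hxy
    simp only [Finset.mem_erase] at hx hy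
    exact hK a ha x hx.2 y hy.2 (Ne.symm hx.1) (Ne.symm hy.1) hxy
  have hKq : K.card ≤ q + 2 := by
    have := card_le_of_br (det3 A) (det3_swap23 A) (det3_pl A) (K.erase A) (hKa A hA)
    rw [Finset.card_erase_of_mem hA] at this
    omega
  obtain ⟨t, ht⟩ : ∃ t, K.card + t = q + 2 := ⟨q + 2 - K.card, by omega⟩
  obtain ⟨J', hJ'J, hJ'c⟩ := Finset.exists_subset_card_eq (show t + 1 ≤ J.card by omega)
  have hAJ : A ∉ J := fun h => hJ A h B hB hAB.symm hN
  have hBJ : B ∉ J := fun h => hJ B h A hA hAB (by rw [det3_swap12]; exact hN)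
  have hAJ' : A ∉ J' := fun h => hAJ (hJ'J h)
  obtain ⟨x0, hx0⟩ : J'.Nonempty := Finset.card_pos.1 (by omega)
  have hx0J := hJ'J hx0
  have hK3 : 3 ≤ K.card := by
    have : ({A, B, x0} : Finset (Fin 3 → F)) ⊆ K := by
      intro z hz
      simp only [Finset.mem_insert, Finset.mem_singleton] at hz
      rcases hz with rfl | rfl | rfl
      · exact hA
      · exact hB
      · exact hJK hx0J
    have h3 : ({A, B, x0} : Finset (Fin 3 → F)).card = 3 := by
      rw [Finset.card_eq_three]
      exact ⟨A, B, x0, hAB, fun h => hAJ (h ▸ hx0J), fun h => hBJ (h ▸ hx0J), rfl⟩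
    have h4 := Finset.card_le_card this
    omega
  have hex : ∀ a ∈ K, ∃ S', K.erase a ⊆ S' ∧ S'.card = q + 1 ∧
      (∀ x ∈ S', ∀ y ∈ S', x ≠ y → det3 a x y ≠ 0) := by
    intro a ha
    exact extend_full a t (K.erase a) (hKa a ha)
      (by rw [Finset.card_erase_of_mem ha]; omega)
      (by rw [Finset.card_erase_of_mem ha]; omega)
  choose! S hSK hSc hS using hex
  let R : (Fin 3 → F) → Finset (Fin 3 → F) := fun a => S a \ K.erase a
  have hRc : ∀ a ∈ K, (R a).card = t := by
    intro a ha
    have := Finset.card_sdiff_add_card_eq_card (hSK a ha)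
    rw [hSc a ha, Finset.card_erase_of_mem ha] at this
    change (S a \ K.erase a).card = t
    omega
  let f : (Fin 3 → F) → (Fin 3 → F) → F := fun a y => ∏ p ∈ R a, det3 a p y
  have hlam : ∀ a ∈ K, ∃ l : F, l ≠ 0 ∧ ∀ j ∈ K.erase a,
      f a j * ∏ m ∈ (K.erase a).erase j, det3 a j m = l := by
    intro a ha
    obtain ⟨b, hb⟩ : (K.erase a).Nonempty := Finset.card_pos.1
      (by rw [Finset.card_erase_of_mem ha]; omega)
    refine ⟨∏ p ∈ (S a).erase b, det3 a b p, ?_, ?_⟩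
    · refine Finset.prod_ne_zero_iff.2 fun p hp => ?_
      exact hS a ha b (hSK a ha hb) p (Finset.mem_of_mem_erase hp)
        (Ne.symm (Finset.ne_of_mem_erase hp))
    · intro j hj
      rw [← prod_const (det3 a) (det3_swap23 a) (det3_pl a) (S a) (hS a ha) (hSc a ha)
        (hSK a ha hj) (hSK a ha hb)]
      have hdec : (S a).erase j = R a ∪ (K.erase a).erase j := by
        ext z
        simp only [R, Finset.mem_union, Finset.mem_erase, Finset.mem_sdiff]
        have := @hSK a ha z
        simp only [Finset.mem_erase] at this hj
        grind
      have hdis : Disjoint (R a) ((K.erase a).erase j) := by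
        rw [Finset.disjoint_left]
        intro z hz hz2
        exact (Finset.mem_sdiff.1 hz).2 (Finset.mem_of_mem_erase hz2)
      rw [hdec, Finset.prod_union hdis]
      congr 1
      exact Finset.prod_congr rfl fun p _ => det3_swap23 a p j
  choose! l hl0 hl using hlam
  set E := insert A J' with hE
  have hEc : E.card = t + 2 := by rw [hE, Finset.card_insert_of_notMem hAJ']; omega
  have hEK : E ⊆ K := by
    intro z hz
    rcases Finset.mem_insert.1 hz with rfl | hz
    · exact hA
    · exact hJK (hJ'J hz)
  have hEN : ∀ a ∈ E, ∀ b ∈ E, a ≠ b → det3 a b N ≠ 0 := by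
    intro a ha b hb hab
    rcases Finset.mem_insert.1 ha with rfl | ha'
    · rcases Finset.mem_insert.1 hb with rfl | hb'
      · exact absurd rfl hab
      · rw [det3_swap12]; exact hJ b (hJ'J hb') _ hA hab
    · exact hJ a (hJ'J ha') b (hEK hb) hab.symm
  -- the symmetric function
  let g : (Fin 3 → F) → (Fin 3 → F) → F := fun a j =>
    (1 / ∏ m ∈ (K.erase a).erase j, det3 a j m) /
      (det3 a j N * ∏ m ∈ (E.erase a).erase j, det3 a j m)
  have hgs : ∀ a j, g a j = g j a := by
    intro a j
    simp only [g]
    rw [Finset.erase_right_comm, Finset.erase_right_comm (s := E), det3_swap12 a j N]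
    congr 1
    · congr 1; exact Finset.prod_congr rfl fun p _ => det3_swap12 a j p
    · congr 1; exact Finset.prod_congr rfl fun p _ => det3_swap12 a j p
  have hmain : ∀ a ∈ E, (f a N / l a) / ∏ m ∈ E.erase a, det3 a N m =
      ∑ j ∈ E.erase a, g a j := by
    intro a ha
    have haK := hEK ha
    have hNE : N ∉ E.erase a := by
      intro h
      have := hEN a ha N (Finset.mem_of_mem_erase h) (Ne.symm (Finset.ne_of_mem_erase h))
      exact this (det3_self _ _)
    have hL := lagr (det3 a) (det3_swap23 a) (det3_pl a) (R a).val (insert N (E.erase a))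
      (by
        rw [Finset.card_insert_of_notMem hNE, Finset.card_erase_of_mem ha, hEc]
        have := hRc a haK
        rw [Finset.card] at this
        omega)
      (by
        intro u hu v hv huv
        rcases Finset.mem_insert.1 hu with hu' | hu' <;>
          rcases Finset.mem_insert.1 hv with hv' | hv'
        · exact absurd (hu'.trans hv'.symm) huv
        · rw [det3_swap23, hu']
          exact hEN a ha v (Finset.mem_of_mem_erase hv') (Ne.symm (Finset.ne_of_mem_erase hv'))
        · rw [hv']
          exact hEN a ha u (Finset.mem_of_mem_erase hu') (Ne.symm (Finset.ne_of_mem_erase hu'))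
        · exact hK a haK u (hEK (Finset.mem_of_mem_erase hu')) v
            (hEK (Finset.mem_of_mem_erase hv')) (Ne.symm (Finset.ne_of_mem_erase hu'))
            (Ne.symm (Finset.ne_of_mem_erase hv')) huv)
    rw [Finset.sum_insert hNE, Finset.erase_insert hNE, CharTwo.add_eq_zero] at hL
    have hf : ∀ y, ((R a).val.map (fun r => det3 a r y)).prod = f a y := fun y => rfl
    simp only [hf] at hL
    rw [div_right_comm, hL, Finset.sum_div]
    refine Finset.sum_congr rfl fun j hj => ?_
    have hja := Finset.ne_of_mem_erase hj
    have hjE := Finset.mem_of_mem_erase hj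
    have hjK : j ∈ K.erase a := Finset.mem_erase.2 ⟨hja, hEK hjE⟩
    have hNj : N ≠ j := fun h => hNE (h ▸ hj)
    have hval := hl a haK j hjK
    have hpr : ∏ m ∈ (K.erase a).erase j, det3 a j m ≠ 0 := by
      intro h; rw [h, mul_zero] at hval; exact hl0 a haK hval.symm
    have : f a j = l a / ∏ m ∈ (K.erase a).erase j, det3 a j m := by
      rw [eq_div_iff hpr]; exact hval
    rw [Finset.erase_insert_of_ne hNj, Finset.prod_insert (by
      intro h; exact hNE (Finset.mem_of_mem_erase h)), this]
    simp only [g]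
    have := hl0 a haK
    rw [div_right_comm, div_right_comm (l a), div_self this]
  have hsum : ∑ a ∈ E, (f a N / l a) / ∏ m ∈ E.erase a, det3 a N m = 0 := by
    rw [Finset.sum_congr rfl hmain, Finset.sum_sigma']
    refine Finset.sum_involution (fun p _ => ⟨p.2, p.1⟩) ?_ ?_ ?_ ?_
    · rintro ⟨a, j⟩ _
      simp only
      rw [hgs j a]; exact CharTwo.add_self_eq_zero _
    · rintro ⟨a, j⟩ h _ heq
      simp only [Finset.mem_sigma, Finset.mem_erase] at h
      simp only [Sigma.mk.injEq] at heq
      exact h.2.1 heq.1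
    · rintro ⟨a, j⟩ h
      simp only [Finset.mem_sigma, Finset.mem_erase] at h ⊢
      exact ⟨h.2.2, Ne.symm h.2.1, h.1⟩
    · rintro ⟨a, j⟩ _; rfl
  have hzero : ∀ a ∈ J', f a N = 0 := by
    intro a ha
    have haK := hJK (hJ'J ha)
    by_contra hfa
    have hne : ∀ p ∈ S a, det3 a p N ≠ 0 := by
      intro p hp
      by_cases hpK : p ∈ K.erase a
      · exact hJ a (hJ'J ha) p (Finset.mem_of_mem_erase hpK) (Finset.ne_of_mem_erase hpK)
      · exact Finset.prod_ne_zero_iff.1 hfa p (Finset.mem_sdiff.2 ⟨hp, hpK⟩)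
    have hNS : N ∉ S a := fun h => hne N h (det3_self _ _)
    have := card_le_of_br (det3 a) (det3_swap23 a) (det3_pl a) (insert N (S a)) (by
      intro u hu v hv huv
      rcases Finset.mem_insert.1 hu with hu' | hu' <;>
        rcases Finset.mem_insert.1 hv with hv' | hv'
      · exact absurd (hu'.trans hv'.symm) huv
      · rw [det3_swap23, hu']; exact hne v hv'
      · rw [hv']; exact hne u hu'
      · exact hS a haK u hu' v hv' huv)
    rw [Finset.card_insert_of_notMem hNS, hSc a haK] at this
    omega
  rw [hE, Finset.sum_insert hAJ', ← hE] at hsum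
  have hrest : ∑ a ∈ J', (f a N / l a) / ∏ m ∈ E.erase a, det3 a N m = 0 := by
    refine Finset.sum_eq_zero fun a ha => ?_
    rw [hzero a ha]; simp
  rw [hrest, add_zero] at hsum
  have hd : ∏ m ∈ E.erase A, det3 A N m ≠ 0 := by
    refine Finset.prod_ne_zero_iff.2 fun m hm => ?_
    rw [det3_swap23]
    exact hEN A (Finset.mem_insert_self _ _) m (Finset.mem_of_mem_erase hm)
      (Ne.symm (Finset.ne_of_mem_erase hm))
  have hfA : f A N = 0 := by
    rcases div_eq_zero_iff.1 hsum with h | h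
    · rcases div_eq_zero_iff.1 h with h | h
      · exact h
      · exact absurd h (hl0 A hA)
    · exact absurd h hd
  obtain ⟨p, hp, hp0⟩ := Finset.prod_eq_zero_iff.1 hfA
  have hpS := (Finset.mem_sdiff.1 hp).1
  have hBS : B ∈ S A := hSK A hA (Finset.mem_erase.2 ⟨hAB.symm, hB⟩)
  have hpB : p ≠ B := by
    rintro rfl
    exact (Finset.mem_sdiff.1 hp).2 (Finset.mem_erase.2 ⟨hAB.symm, hB⟩)
  have h1 := hS A hA p hpS B hBS hpB
  have h2 : det3 A N x0 ≠ 0 := by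
    rw [det3_swap23, det3_swap12]
    exact hJ x0 hx0J A hA (fun h => hAJ (h ▸ hx0J))
  have h3 := det3_pl A p B N x0
  have h4 : det3 A p N = 0 := hp0
  rw [h4, hN, zero_mul, mul_zero, add_zero, add_zero] at h3
  exact (mul_ne_zero h1 h2) h3

end Vec
end CapAux

namespace CapAux
section TLemma
open scoped Classical

variable {ι β : Type*}

lemma tl_sum (T : Finset ι) (B : Finset β) (tr : β → Finset ι)
    (h1 : ∀ x ∈ T, ∀ y ∈ T, x ≠ y → ∃ b ∈ B, x ∈ tr b ∧ y ∈ tr b)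
    (h2 : ∀ b ∈ B, ∀ b' ∈ B, b ≠ b' → (tr b ∩ tr b').card ≤ 1)
    (x : ι) (hx : x ∈ T) (S : Finset ι) (hS : S ⊆ T) (hxS : x ∉ S) :
    ∑ b ∈ B.filter (fun b => x ∈ tr b), (tr b ∩ S).card = S.card := by
  rw [← Finset.card_biUnion]
  · congr 1
    ext y
    simp only [Finset.mem_biUnion, Finset.mem_filter, Finset.mem_inter]
    constructor
    · rintro ⟨b, _, _, h⟩; exact h
    · intro hy
      obtain ⟨b, hb, h3, h4⟩ := h1 x hx y (hS hy) (fun h => hxS (h ▸ hy))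
      exact ⟨b, ⟨hb, h3⟩, h4, hy⟩
  · intro b hb b' hb' hne
    rw [Finset.mem_coe, Finset.mem_filter] at hb hb'
    rw [Function.onFun, Finset.disjoint_left]
    intro y hy hy'
    rw [Finset.mem_inter] at hy hy'
    have := Finset.card_le_one.1 (h2 b hb.1 b' hb'.1 hne) x (Finset.mem_inter.2 ⟨hb.2, hb'.2⟩)
      y (Finset.mem_inter.2 ⟨hy.1, hy'.1⟩)
    exact hxS (this ▸ hy.2)

lemma tl_max (B : Finset β) (hB : B.Nonempty) (tr : β → Finset ι) (S : Finset ι) :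
    ∃ a ∈ B, ∀ b ∈ B, (tr b ∩ S).card ≤ (tr a ∩ S).card :=
  Finset.exists_max_image B (fun b => (tr b ∩ S).card) hB

lemma tl_arith1 (q t t3 mu : ℕ) (hq : 2048 ≤ q) (ht : t + 20 ≤ 3 * q)
    (h : q ^ 2 + q + 1 ≤ t + (9 * t + mu * t3)) (h2 : t3 + 3 * mu ≤ t) : False := by
  have h3 : 12 * (mu * t3) ≤ t ^ 2 := by
    zify at *
    nlinarith [sq_nonneg ((t3 : ℤ) - 3 * mu)]
  have h4 : t ^ 2 ≤ (3 * q) ^ 2 := Nat.pow_le_pow_left (by omega) 2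
  nlinarith

lemma tl_arith2 (q t s w : ℕ) (hq : 2048 ≤ q) (h : q ^ 2 + q + 1 ≤ t + (s ^ 2 + 1 * w))
    (hw : w + s + 1 = t) (ht : t < 2 * q) (hs : s < q) : False := by
  zify at *
  nlinarith [mul_nonneg (show (0 : ℤ) ≤ q - 1 - s by omega) (show (0 : ℤ) ≤ s + q - 2 by omega)]

set_option maxHeartbeats 1000000 in
theorem tl (q : ℕ) (hq : 2048 ≤ q) (T : Finset ι) (B : Finset β) (tr : β → Finset ι)
    (h1 : ∀ x ∈ T, ∀ y ∈ T, x ≠ y → ∃ b ∈ B, x ∈ tr b ∧ y ∈ tr b)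
    (h2 : ∀ b ∈ B, ∀ b' ∈ B, b ≠ b' → (tr b ∩ tr b').card ≤ 1)
    (hT : ∀ b ∈ B, tr b ⊆ T) (hc : ∀ b ∈ B, (tr b).card ≤ q + 1)
    (hne : T.Nonempty) (ht : T.card + 20 ≤ 3 * q)
    (hQ : ∀ x ∈ T, q ^ 2 + q + 1 ≤ T.card +
      ∑ b ∈ B.filter (fun b => x ∈ tr b), ((tr b).card - 1) ^ 2) :
    (∃ a ∈ B, T = tr a ∧ T.card = q + 1) ∨
    (∃ a ∈ B, ∃ b ∈ B, a ≠ b ∧ T ⊆ tr a ∪ tr b ∧ 2 * q ≤ T.card) := by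
  have hs : ∀ x ∈ T, ∑ b ∈ B.filter (fun b => x ∈ tr b), ((tr b).card - 1) + 1 = T.card := by
    intro x hx
    have := tl_sum T B tr h1 h2 x hx (T.erase x) (Finset.erase_subset _ _) (by simp)
    rw [Finset.card_erase_of_mem hx] at this
    have hp := Finset.card_pos.2 hne
    rw [← Nat.sub_add_cancel hp, ← this]
    congr 1
    refine Finset.sum_congr rfl fun b hb => ?_
    rw [Finset.mem_filter] at hb
    have : tr b ∩ T.erase x = (tr b).erase x := by
      ext y
      simp only [Finset.mem_inter, Finset.mem_erase]
      have := @hT b hb.1 y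
      tauto
    rw [this, Finset.card_erase_of_mem hb.2]
  -- main bound: if all blocks but `c` through `x` have `s ≤ m`
  have hbd : ∀ x ∈ T, ∀ c ∈ B, x ∈ tr c → ∀ m : ℕ,
      (∀ b ∈ B, x ∈ tr b → b ≠ c → (tr b).card - 1 ≤ m) →
      q ^ 2 + q + 1 ≤ T.card + (((tr c).card - 1) ^ 2 + m * (T.card - 1 - ((tr c).card - 1))) := by
    intro x hx c hcB hxc m hm
    refine (hQ x hx).trans ?_
    have hcm : c ∈ B.filter (fun b => x ∈ tr b) := Finset.mem_filter.2 ⟨hcB, hxc⟩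
    have h3 := hs x hx
    rw [← Finset.add_sum_erase _ _ hcm] at h3 ⊢
    have : ∑ b ∈ (B.filter (fun b => x ∈ tr b)).erase c, ((tr b).card - 1) ^ 2 ≤
        m * ∑ b ∈ (B.filter (fun b => x ∈ tr b)).erase c, ((tr b).card - 1) := by
      rw [Finset.mul_sum]
      refine Finset.sum_le_sum fun b hb => ?_
      simp only [Finset.mem_erase, Finset.mem_filter] at hb
      rw [sq]
      exact Nat.mul_le_mul_right _ (hm b hb.2.1 hb.2.2 hb.1)
    have h4 : ∑ b ∈ (B.filter (fun b => x ∈ tr b)).erase c, ((tr b).card - 1) =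
      T.card - 1 - ((tr c).card - 1) := by omega
    rw [h4] at this
    omega
  obtain ⟨x0, hx0⟩ := hne
  have ht2 : 2 ≤ T.card := by
    by_contra hcon
    have h3 := hs x0 hx0
    have h4 : ∑ b ∈ B.filter (fun b => x0 ∈ tr b), ((tr b).card - 1) = 0 := by omega
    have h5 : ∑ b ∈ B.filter (fun b => x0 ∈ tr b), ((tr b).card - 1) ^ 2 = 0 := by
      refine Finset.sum_eq_zero fun b hb => ?_
      rw [Finset.sum_eq_zero_iff.1 h4 b hb]; rfl
    have := hQ x0 hx0
    rw [h5] at this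
    nlinarith
  obtain ⟨u, hu, v, hv, huv⟩ := Finset.one_lt_card.1 (show 1 < T.card by omega)
  obtain ⟨b0, hb0, hub0, hvb0⟩ := h1 u hu v hv huv
  have hB : B.Nonempty := ⟨b0, hb0⟩
  have hint : ∀ b ∈ B, tr b ∩ T = tr b := fun b hb => Finset.inter_eq_left.2 (hT b hb)
  obtain ⟨a, ha, hamax⟩ := tl_max B hB tr T
  obtain ⟨b, hb, hbmax⟩ := tl_max B hB tr (T \ tr a)
  obtain ⟨c, hc', hcmax⟩ := tl_max B hB tr ((T \ tr a) \ tr b)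
  have hsplit : ∀ (S X : Finset ι), (X ∩ S).card + (S \ X).card = S.card := by
    intro S X
    rw [Finset.inter_comm]; exact Finset.card_inter_add_card_sdiff S X
  have e1 := hsplit T (tr a)
  have e2 := hsplit (T \ tr a) (tr b)
  have e3 := hsplit ((T \ tr a) \ tr b) (tr c)
  rw [hint a ha] at e1
  have ha2 : 2 ≤ (tr a).card := by
    have h3 := hamax b0 hb0
    rw [hint a ha, hint b0 hb0] at h3
    exact le_trans (Finset.one_lt_card.2 ⟨u, hub0, v, hvb0, huv⟩) h3
  -- removing a different block costs at most one
  have hcut : ∀ y ∈ B, ∀ z ∈ B, y ≠ z → ∀ S, (tr y ∩ S).card ≤ (tr y ∩ (S \ tr z)).card + 1 := by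
    intro y hy z hz hyz S
    have h3 := hsplit (tr y ∩ S) (tr z)
    have h4 : (tr z ∩ (tr y ∩ S)).card ≤ 1 := by
      refine le_trans (Finset.card_le_card ?_) (h2 y hy z hz hyz)
      intro p; simp only [Finset.mem_inter]; tauto
    have h5 : (tr y ∩ S) \ tr z = tr y ∩ (S \ tr z) := by
      ext p; simp only [Finset.mem_inter, Finset.mem_sdiff]; tauto
    rw [h5] at h3
    omega
  by_cases hT3 : (((T \ tr a) \ tr b) \ tr c).Nonempty
  · exfalso
    set T3 := ((T \ tr a) \ tr b) \ tr c with hT3d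
    obtain ⟨x, hx⟩ := hT3
    obtain ⟨d, hd, hdmax⟩ := tl_max B hB tr T3
    have hx' := hx
    simp only [hT3d, Finset.mem_sdiff] at hx'
    have hxT : x ∈ T := hx'.1.1.1
    have m1 : (tr d ∩ T3).card ≤ (tr c ∩ ((T \ tr a) \ tr b)).card :=
      le_trans (Finset.card_le_card (Finset.inter_subset_inter_left Finset.sdiff_subset))
        (hcmax d hd)
    have m2 : (tr d ∩ T3).card ≤ (tr b ∩ (T \ tr a)).card :=
      le_trans (Finset.card_le_card (Finset.inter_subset_inter_left
        (Finset.sdiff_subset.trans Finset.sdiff_subset))) (hbmax d hd)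
    have m3 : (tr d ∩ T3).card ≤ (tr a).card := by
      have h3 := hamax d hd
      rw [hint a ha, hint d hd] at h3
      exact le_trans (Finset.card_le_card Finset.inter_subset_left) h3
    have hr := tl_sum T B tr h1 h2 x hxT (T3.erase x)
      (fun p hp => by
        have := Finset.mem_of_mem_erase hp
        simp only [hT3d, Finset.mem_sdiff] at this
        exact this.1.1.1) (by simp)
    have hT3c : (T3.erase x).card ≤ T3.card := Finset.card_le_card (Finset.erase_subset _ _)
    have hss := hs x hxT
    have hle : ∑ y ∈ B.filter (fun b => x ∈ tr b), ((tr y).card - 1) ^ 2 ≤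
        ∑ y ∈ B.filter (fun b => x ∈ tr b), (9 * ((tr y).card - 1) +
          (tr d ∩ T3).card * (tr y ∩ T3.erase x).card) := by
      refine Finset.sum_le_sum fun y hy => ?_
      rw [Finset.mem_filter] at hy
      have k1 := hcut y hy.1 a ha (fun h => hx'.1.1.2 (h ▸ hy.2)) T
      have k2 := hcut y hy.1 b hb (fun h => hx'.1.2 (h ▸ hy.2)) (T \ tr a)
      have k3 := hcut y hy.1 c hc' (fun h => hx'.2 (h ▸ hy.2)) ((T \ tr a) \ tr b)
      rw [hint y hy.1] at k1
      have k4 : tr y ∩ T3.erase x = (tr y ∩ T3).erase x := by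
        ext p; simp only [Finset.mem_inter, Finset.mem_erase]; tauto
      have k5 : (tr y ∩ T3.erase x).card + 1 = (tr y ∩ T3).card := by
        rw [k4]; exact Finset.card_erase_add_one (Finset.mem_inter.2 ⟨hy.2, hx⟩)
      have k6 := hdmax y hy.1
      have k7 : (tr y ∩ T3).card ≤ (tr y).card := Finset.card_le_card Finset.inter_subset_left
      rw [← hT3d] at k3
      obtain ⟨r, hr'⟩ : ∃ r, (tr y ∩ T3.erase x).card = r := ⟨_, rfl⟩
      obtain ⟨s, hs'⟩ : ∃ s, (tr y).card - 1 = s := ⟨_, rfl⟩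
      rw [hr', hs']
      have k8 : s ≤ r + 3 := by omega
      have k9 : r ≤ s := by omega
      have k10 : r ≤ (tr d ∩ T3).card := by omega
      have k11 : r * r ≤ (tr d ∩ T3).card * r := Nat.mul_le_mul_right _ k10
      nlinarith
    rw [Finset.sum_add_distrib, ← Finset.mul_sum, ← Finset.mul_sum, hr] at hle
    have hle2 : (tr d ∩ T3).card * (T3.erase x).card ≤ (tr d ∩ T3).card * T3.card :=
      Nat.mul_le_mul_left _ hT3c
    refine tl_arith1 q T.card T3.card (tr d ∩ T3).card hq ht ?_ (by omega)
    have := hQ x hxT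
    omega
  · rw [Finset.not_nonempty_iff_eq_empty, Finset.sdiff_eq_empty_iff_subset] at hT3
    by_cases hT2 : ((T \ tr a) \ tr b).Nonempty
    · exfalso
      obtain ⟨x, hx⟩ := hT2
      have hxc := hT3 hx
      simp only [Finset.mem_sdiff] at hx
      have hca : c ≠ a := fun h => hx.1.2 (h ▸ hxc)
      have hcb : c ≠ b := fun h => hx.2 (h ▸ hxc)
      have k := hbd x hx.1.1 c hc' hxc 2 (by
        intro y hy hxy hyc
        have k1 := hcut y hy a ha (fun h => hx.1.2 (h ▸ hxy)) T
        have k2 := hcut y hy b hb (fun h => hx.2 (h ▸ hxy)) (T \ tr a)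
        have k3 : (tr y ∩ ((T \ tr a) \ tr b)).card ≤ 1 :=
          le_trans (Finset.card_le_card (Finset.inter_subset_inter_left hT3)) (h2 y hy c hc' hyc)
        rw [hint y hy] at k1
        omega)
      have l1 := hcut c hc' a ha hca T
      have l2 := hcut c hc' b hb hcb (T \ tr a)
      rw [hint c hc'] at l1
      have l3 := hbmax c hc'
      have l4 := hamax c hc'
      rw [hint a ha, hint c hc'] at l4
      have l5 : (tr c).card - 1 ≤ q - 7 := by omega
      have l6 : ((tr c).card - 1) ^ 2 ≤ (q - 7) ^ 2 := Nat.pow_le_pow_left l5 2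
      have l7 : T.card - 1 - ((tr c).card - 1) ≤ T.card := by omega
      obtain ⟨p, rfl⟩ : ∃ p, q = p + 7 := ⟨q - 7, by omega⟩
      rw [Nat.add_sub_cancel] at l6
      nlinarith
    · rw [Finset.not_nonempty_iff_eq_empty, Finset.sdiff_eq_empty_iff_subset] at hT2
      by_cases hT1 : (T \ tr a).Nonempty
      · right
        obtain ⟨x, hx⟩ := hT1
        have hxb := hT2 hx
        simp only [Finset.mem_sdiff] at hx
        have hab : a ≠ b := fun h => hx.2 (h ▸ hxb)
        have hTab : T ⊆ tr a ∪ tr b := by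
          intro p hp
          by_cases hpa : p ∈ tr a
          · exact Finset.mem_union_left _ hpa
          · exact Finset.mem_union_right _ (hT2 (Finset.mem_sdiff.2 ⟨hp, hpa⟩))
        refine ⟨a, ha, b, hb, hab, hTab, ?_⟩
        have hiab := h2 a ha b hb hab
        have hz : (tr a \ tr b).Nonempty := by
          rw [← Finset.card_pos]
          have := hsplit (tr a) (tr b)
          rw [Finset.inter_comm] at this
          omega
        obtain ⟨z, hz⟩ := hz
        rw [Finset.mem_sdiff] at hz
        have hun : ∀ y ∈ B, y ≠ a → y ≠ b → (tr y).card - 1 ≤ 1 := by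
          intro y hy hya hyb
          have h5 := h2 y hy a ha hya
          have h6 := h2 y hy b hb hyb
          have h7 : (tr y).card ≤ (tr y ∩ tr a ∪ tr y ∩ tr b).card := by
            rw [← Finset.inter_union_distrib_left]
            refine Finset.card_le_card fun p hp => Finset.mem_inter.2 ⟨hp, hTab (hT y hy hp)⟩
          have h8 := Finset.card_union_le (tr y ∩ tr a) (tr y ∩ tr b)
          omega
        have ka := hbd x hx.1 b hb hxb 1 (fun y hy hxy hyb =>
          hun y hy (fun h => hx.2 (h ▸ hxy)) hyb)
        have kb := hbd z (hT a ha hz.1) a ha hz.1 1 (fun y hy hzy hya =>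
          hun y hy hya (fun h => hz.2 (h ▸ hzy)))
        by_contra hlt
        have hcu := Finset.card_union_add_card_inter (tr a) (tr b)
        have hcu2 : (tr a ∪ tr b).card ≤ T.card :=
          Finset.card_le_card (Finset.union_subset (hT a ha) (hT b hb))
        have har : ∀ y ∈ B, q ^ 2 + q + 1 ≤ T.card + (((tr y).card - 1) ^ 2 +
            1 * (T.card - 1 - ((tr y).card - 1))) → q ≤ (tr y).card - 1 := by
          intro y hy hh
          have hyT := Finset.card_le_card (hT y hy)
          by_contra hcon
          obtain ⟨s, hs'⟩ : ∃ s, (tr y).card - 1 = s := ⟨_, rfl⟩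
          rw [hs'] at hh hcon
          obtain ⟨w, hw⟩ : ∃ w, T.card - 1 - s = w := ⟨_, rfl⟩
          rw [hw] at hh
          have hws : w + s + 1 = T.card := by omega
          exact tl_arith2 q T.card s w hq hh hws (by omega) (by omega)
        have := har a ha kb
        have := har b hb ka
        omega
      · left
        rw [Finset.not_nonempty_iff_eq_empty, Finset.sdiff_eq_empty_iff_subset] at hT1
        have hTa : T = tr a := Finset.Subset.antisymm hT1 (hT a ha)
        refine ⟨a, ha, hTa, ?_⟩
        have k := hbd x0 hx0 a ha (hT1 hx0) 0 (by
          intro y hy _ hya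
          have h5 := h2 y hy a ha hya
          rw [← hTa, hint y hy] at h5
          omega)
        have hca := hc a ha
        rw [← hTa] at k hca
        obtain ⟨s, hs'⟩ : ∃ s, T.card = s + 1 := ⟨T.card - 1, by omega⟩
        rw [hs'] at k hca ⊢
        simp only [Nat.add_sub_cancel] at k
        by_contra hcon
        have : s + 1 ≤ q := by omega
        nlinarith

end TLemma
end CapAux

namespace CapAux
section Incidence
open scoped Classical

variable {F V : Type*} [Field F] [Fintype F] [AddCommGroup V] [Module F V] [Finite V]

/-- The subspaces between `U` and `W` of dimension one more than `U`. -/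
noncomputable def cov (U W : Submodule F V) : Finset (Submodule F V) :=
  (Set.toFinite {X : Submodule F V | U ≤ X ∧ X ≤ W ∧ finrank F X = finrank F U + 1}).toFinset

lemma mem_cov {U W X : Submodule F V} :
    X ∈ cov U W ↔ U ≤ X ∧ X ≤ W ∧ finrank F X = finrank F U + 1 := by
  simp [cov]

lemma eq_of_le_fr {X Y : Submodule F V} (h : X ≤ Y) (h2 : finrank F Y ≤ finrank F X) : X = Y :=
  Submodule.eq_of_le_of_finrank_le h h2

lemma fr_mono {X Y : Submodule F V} (h : X ≤ Y) : finrank F X ≤ finrank F Y :=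
  Submodule.finrank_mono h

lemma sup_eq_cov {U X P : Submodule F V} (hP : ¬ P ≤ U) (hPX : P ≤ X) (hU : U ≤ X)
    (hX : finrank F X = finrank F U + 1) : U ⊔ P = X := by
  refine eq_of_le_fr (sup_le hU hPX) ?_
  have : finrank F U < finrank F (U ⊔ P : Submodule F V) :=
    Submodule.finrank_lt_finrank_of_lt (left_lt_sup.2 hP)
  omega

lemma fr_sup_pt {U P : Submodule F V} (hP1 : finrank F P = 1) (hP : ¬ P ≤ U) :
    finrank F (U ⊔ P : Submodule F V) = finrank F U + 1 := by
  have h1 : finrank F U < finrank F (U ⊔ P : Submodule F V) :=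
    Submodule.finrank_lt_finrank_of_lt (left_lt_sup.2 hP)
  have h2 := Submodule.finrank_add_le_finrank_add_finrank U P
  omega

lemma pt_le_pt {P R : Submodule F V} (hP : finrank F P = 1) (hR : finrank F R = 1)
    (h : R ≤ P) : R = P := eq_of_le_fr h (by omega)

lemma fr_line {P R : Submodule F V} (hP : finrank F P = 1) (hR : finrank F R = 1)
    (h : R ≠ P) : finrank F (P ⊔ R : Submodule F V) = 2 := by
  rw [fr_sup_pt hR (fun h2 => h (pt_le_pt hP hR h2)), hP]

lemma natcard_sub (X : Submodule F V) : Nat.card X = Fintype.card F ^ finrank F X := by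
  rw [Module.natCard_eq_pow_finrank (K := F), Nat.card_eq_fintype_card]

/-- Vectors of a subspace. -/
noncomputable def vs (X : Submodule F V) : Finset V := (Set.toFinite (X : Set V)).toFinset

lemma mem_vs {X : Submodule F V} {v : V} : v ∈ vs X ↔ v ∈ X := by simp [vs]

lemma card_vs (X : Submodule F V) : (vs X).card = Fintype.card F ^ finrank F X := by
  rw [← natcard_sub, vs, ← Set.ncard_eq_toFinset_card]
  rfl

lemma vs_mono {X Y : Submodule F V} (h : X ≤ Y) : vs X ⊆ vs Y := by
  intro v hv; rw [mem_vs] at *; exact h hv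

lemma fiber {U W : Submodule F V} {M : Type*} [AddCommMonoid M] {ι : Type*} (S : Finset ι)
    (g : ι → Submodule F V)
    (hS : ∀ Y ∈ S, U ⊔ g Y ∈ cov U W) (f : ι → M) :
    ∑ Y ∈ S, f Y = ∑ X ∈ cov U W, ∑ Y ∈ S.filter (fun Y => g Y ≤ X), f Y := by
  rw [← Finset.sum_fiberwise_of_maps_to (g := fun Y => U ⊔ g Y) hS]
  refine Finset.sum_congr rfl fun X hX => Finset.sum_congr ?_ fun _ _ => rfl
  refine Finset.filter_congr fun Y hY => ?_
  have h1 := mem_cov.1 (hS Y hY)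
  rw [mem_cov] at hX
  constructor
  · rintro rfl; exact le_sup_right
  · intro h
    exact eq_of_le_fr (sup_le hX.1 h) (by omega)

lemma card_cov_mul {U W : Submodule F V} (hUW : U ≤ W) (n : ℕ)
    (hn : finrank F W = finrank F U + n) :
    (cov U W).card * (Fintype.card F - 1) = Fintype.card F ^ n - 1 := by
  set q := Fintype.card F with hq
  have hq1 : 0 < q := Fintype.card_pos
  have hS : ∀ v ∈ vs W \ vs U, U ⊔ (Submodule.span F {v}) ∈ cov U W := by
    intro v hv
    simp only [Finset.mem_sdiff, mem_vs] at hv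
    have hv0 : v ≠ 0 := fun h => hv.2 (h ▸ U.zero_mem)
    refine mem_cov.2 ⟨le_sup_left, sup_le hUW ?_, fr_sup_pt (finrank_span_singleton hv0) ?_⟩
    · rw [Submodule.span_singleton_le_iff_mem]; exact hv.1
    · rw [Submodule.span_singleton_le_iff_mem]; exact hv.2
  have h := fiber (vs W \ vs U) (fun v => Submodule.span F {v}) hS (fun _ => 1)
  simp only [Finset.sum_const, smul_eq_mul, mul_one] at h
  rw [Finset.sum_congr rfl (g := fun _ => q ^ (finrank F U) * (q - 1))] at h
  · rw [Finset.card_sdiff_of_subset (vs_mono hUW), card_vs, card_vs, hn, ← hq, Finset.sum_const,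
      smul_eq_mul] at h
    have h2 : q ^ (finrank F U + n) - q ^ finrank F U = q ^ finrank F U * (q ^ n - 1) := by
      rw [Nat.mul_sub, pow_add, mul_one]
    rw [h2] at h
    have h3 : 0 < q ^ finrank F U := by positivity
    apply Nat.eq_of_mul_eq_mul_left h3
    rw [h]; ring
  · intro X hX
    rw [mem_cov] at hX
    have : (vs W \ vs U).filter (fun v => Submodule.span F {v} ≤ X) = vs X \ vs U := by
      ext v
      simp only [Finset.mem_filter, Finset.mem_sdiff, mem_vs, Submodule.span_singleton_le_iff_mem]
      have := @hX.2.1 v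
      tauto
    rw [this, Finset.card_sdiff_of_subset (vs_mono hX.1), card_vs, card_vs, hX.2.2, ← hq,
      pow_succ, Nat.mul_sub, mul_one]

lemma q_pos1 : 2 ≤ Fintype.card F := Fintype.one_lt_card

lemma card_cov1 {U W : Submodule F V} (hUW : U ≤ W) (hn : finrank F W = finrank F U + 1) :
    (cov U W).card = 1 := by
  have h := card_cov_mul hUW 1 hn
  have := q_pos1 (F := F)
  rw [pow_one] at h
  exact Nat.eq_of_mul_eq_mul_right (show 0 < Fintype.card F - 1 by omega) (by omega)

lemma card_cov2 {U W : Submodule F V} (hUW : U ≤ W) (hn : finrank F W = finrank F U + 2) :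
    (cov U W).card = Fintype.card F + 1 := by
  have h := card_cov_mul hUW 2 hn
  have := q_pos1 (F := F)
  obtain ⟨p, hp⟩ : ∃ p, Fintype.card F = p + 2 := ⟨Fintype.card F - 2, by omega⟩
  rw [hp] at h ⊢
  have e : (p + 2) ^ 2 - 1 = (p + 2 + 1) * (p + 1) := by
    have : (p + 2) ^ 2 = (p + 2 + 1) * (p + 1) + 1 := by ring
    omega
  rw [e] at h
  exact Nat.eq_of_mul_eq_mul_right (Nat.succ_pos p) h

lemma card_cov3 {U W : Submodule F V} (hUW : U ≤ W) (hn : finrank F W = finrank F U + 3) :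
    (cov U W).card = Fintype.card F ^ 2 + Fintype.card F + 1 := by
  have h := card_cov_mul hUW 3 hn
  have := q_pos1 (F := F)
  obtain ⟨p, hp⟩ : ∃ p, Fintype.card F = p + 2 := ⟨Fintype.card F - 2, by omega⟩
  rw [hp] at h ⊢
  have e : (p + 2) ^ 3 - 1 = ((p + 2) ^ 2 + (p + 2) + 1) * (p + 1) := by
    have : (p + 2) ^ 3 = ((p + 2) ^ 2 + (p + 2) + 1) * (p + 1) + 1 := by ring
    omega
  rw [e] at h
  exact Nat.eq_of_mul_eq_mul_right (Nat.succ_pos p) h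

/-- Caps, as finite sets of one-dimensional subspaces. -/
structure Cap (C : Finset (Submodule F V)) : Prop where
  pt : ∀ P ∈ C, finrank F P = 1
  nc : ∀ P ∈ C, ∀ Q ∈ C, ∀ R ∈ C, P ≠ Q → P ≠ R → Q ≠ R → ¬ R ≤ P ⊔ Q

/-- Points of `C` inside `W`. -/
noncomputable def sec (C : Finset (Submodule F V)) (W : Submodule F V) :
    Finset (Submodule F V) := C.filter (fun P => P ≤ W)

lemma mem_sec {C : Finset (Submodule F V)} {W P : Submodule F V} :
    P ∈ sec C W ↔ P ∈ C ∧ P ≤ W := by simp [sec]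

lemma sec_subset (C : Finset (Submodule F V)) (W : Submodule F V) : sec C W ⊆ C :=
  Finset.filter_subset _ _

lemma Cap.mono {C D : Finset (Submodule F V)} (h : Cap C) (hD : D ⊆ C) : Cap D :=
  ⟨fun P hP => h.pt P (hD hP), fun P hP Q hQ R hR => h.nc P (hD hP) Q (hD hQ) R (hD hR)⟩

/-- Points of the cap joined to `N` by a tangent. -/
noncomputable def jn (C : Finset (Submodule F V)) (N : Submodule F V) :
    Finset (Submodule F V) := C.filter (fun P => ∀ R ∈ C, R ≠ P → ¬ R ≤ P ⊔ N)

lemma mem_jn {C : Finset (Submodule F V)} {N P : Submodule F V} :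
    P ∈ jn C N ↔ P ∈ C ∧ ∀ R ∈ C, R ≠ P → ¬ R ≤ P ⊔ N := by simp [jn]

/-- Tangents at `P` inside `W`. -/
noncomputable def tng (C : Finset (Submodule F V)) (P W : Submodule F V) :
    Finset (Submodule F V) := (cov P W).filter (fun l => ∀ R ∈ C, R ≤ l → R = P)

lemma mem_tng {C : Finset (Submodule F V)} {P W l : Submodule F V} :
    l ∈ tng C P W ↔ l ∈ cov P W ∧ ∀ R ∈ C, R ≤ l → R = P := by simp [tng]

/-- exchange property for points on a line -/
lemma exch {P Q R : Submodule F V} (hP : finrank F P = 1) (hQ : finrank F Q = 1)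
    (hR : finrank F R = 1) (hPR : R ≠ P) (h : R ≤ P ⊔ Q) : Q ≤ P ⊔ R := by
  have hPQ : Q ≠ P := by
    rintro rfl
    rw [sup_idem] at h
    exact hPR (pt_le_pt hP hR h)
  have h1 := fr_line hP hR hPR
  have h2 := fr_line hP hQ hPQ
  have : P ⊔ R = P ⊔ Q := eq_of_le_fr (sup_le le_sup_left h) (by omega)
  rw [this]; exact le_sup_right

lemma cov_of_pt {U W P : Submodule F V} (hP1 : finrank F P = 1) (hU : U ≤ W) (hPW : P ≤ W)
    (hP : ¬ P ≤ U) : U ⊔ P ∈ cov U W :=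
  mem_cov.2 ⟨le_sup_left, sup_le hU hPW, fr_sup_pt hP1 hP⟩

lemma card_tng {C : Finset (Submodule F V)} (hC : Cap C) {P W : Submodule F V} (hP : P ∈ C)
    (hPW : P ≤ W) : (tng C P W).card + (sec C W).card = (cov P W).card + 1 := by
  have hPs : P ∈ sec C W := mem_sec.2 ⟨hP, hPW⟩
  have h1 : ((sec C W).erase P).card + 1 = (sec C W).card := Finset.card_erase_add_one hPs
  have h2 := Finset.card_filter_add_card_filter_not (s := cov P W)
    (fun l => ∀ R ∈ C, R ≤ l → R = P)
  have h3 : ((sec C W).erase P).card =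
      ((cov P W).filter (fun l => ¬ ∀ R ∈ C, R ≤ l → R = P)).card := by
    refine Finset.card_bij (fun R _ => P ⊔ R) ?_ ?_ ?_
    · intro R hR
      rw [Finset.mem_erase, mem_sec] at hR
      refine Finset.mem_filter.2 ⟨cov_of_pt (hC.pt R hR.2.1) hPW hR.2.2 ?_, ?_⟩
      · intro h; exact hR.1 (pt_le_pt (hC.pt P hP) (hC.pt R hR.2.1) h)
      · intro h; exact hR.1 (h R hR.2.1 le_sup_right)
    · intro R hR S hS hRS
      rw [Finset.mem_erase, mem_sec] at hR hS
      by_contra hne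
      refine hC.nc P hP R hR.2.1 S hS.2.1 (Ne.symm hR.1) (Ne.symm hS.1) hne ?_
      change P ⊔ R = P ⊔ S at hRS
      rw [hRS]; exact le_sup_right
    · intro l hl
      rw [Finset.mem_filter, mem_cov] at hl
      obtain ⟨hl1, hl2⟩ := hl
      push Not at hl2
      obtain ⟨R, hR, hRl, hRP⟩ := hl2
      exact ⟨R, Finset.mem_erase.2 ⟨hRP, mem_sec.2 ⟨hR, hRl.trans hl1.2.1⟩⟩,
        sup_eq_cov (fun h => hRP (pt_le_pt (hC.pt P hP) (hC.pt R hR) h)) hRl hl1.1 hl1.2.2⟩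
  rw [tng]
  omega

end Incidence
end CapAux

namespace CapAux
section SegreProj
open scoped Classical
set_option linter.unusedSectionVars false

variable {F V : Type*} [Field F] [Fintype F] [AddCommGroup V] [Module F V] [Finite V]

lemma det3_eq_det (x y z : Fin 3 → F) : det3 x y z = Matrix.det (Matrix.of ![x, y, z]) := by
  rw [Matrix.det_fin_three, det3]
  simp
  ring

lemma det3_dep {x y z : Fin 3 → F} (h : det3 x y z = 0) (hx : x ≠ 0)
    (hy : ∀ c : F, y ≠ c • x) : ∃ a b : F, z = a • x + b • y := by
  rw [det3_eq_det] at h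
  obtain ⟨c, hc0, hc⟩ := Matrix.exists_vecMul_eq_zero_iff.2 h
  have hc2 : c 0 • x + c 1 • y + c 2 • z = 0 := by
    rw [← hc]
    ext i
    simp [Matrix.vecMul, dotProduct, Fin.sum_univ_three]
  by_cases h2 : c 2 = 0
  · exfalso
    rw [h2, zero_smul, add_zero] at hc2
    by_cases h1 : c 1 = 0
    · rw [h1, zero_smul, add_zero] at hc2
      rcases smul_eq_zero.1 hc2 with h0 | h0
      · apply hc0; ext i; fin_cases i <;> simp [h0, h1, h2]
      · exact hx h0
    · apply hy (-(c 0 / c 1))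
      ext i
      have := congrFun hc2 i
      simp at this ⊢
      field_simp
      linear_combination this
  · refine ⟨-(c 0 / c 2), -(c 1 / c 2), ?_⟩
    ext i
    have := congrFun hc2 i
    simp at this ⊢
    field_simp
    linear_combination this

lemma det3_of_dep (x y : Fin 3 → F) (a b : F) : det3 x y (a • x + b • y) = 0 := by
  simp [det3]
  ring

lemma exists_rep {P : Submodule F V} (hP : finrank F P = 1) :
    ∃ v : V, v ≠ 0 ∧ P = Submodule.span F {v} := by
  obtain ⟨v, hv0, hv⟩ := finrank_eq_one_iff'.1 hP
  refine ⟨v, fun h => hv0 (Subtype.ext h), ?_⟩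
  apply le_antisymm
  · intro w hw
    obtain ⟨c, hc⟩ := hv ⟨w, hw⟩
    rw [Submodule.mem_span_singleton]
    exact ⟨c, congrArg Subtype.val hc⟩
  · rw [Submodule.span_singleton_le_iff_mem]; exact v.2

theorem segre_plane [CharP F 2] {C : Finset (Submodule F V)} (hC : Cap C)
    {W N A B : Submodule F V} (hW : finrank F W = 3) (hN1 : finrank F N = 1) (hNW : N ≤ W)
    (hNC : N ∉ C) (hA : A ∈ C) (hB : B ∈ C) (hAW : A ≤ W) (hBW : B ≤ W) (hAB : A ≠ B)
    (hNAB : N ≤ A ⊔ B) :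
    (sec C W).card + (sec (jn C N) W).card ≤ Fintype.card F + 2 := by
  have hrep : ∀ P : Submodule F V, ∃ v : V, finrank F P = 1 →
      v ≠ 0 ∧ P = Submodule.span F {v} := by
    intro P
    by_cases h : finrank F P = 1
    · obtain ⟨v, hv⟩ := exists_rep h
      exact ⟨v, fun _ => hv⟩
    · exact ⟨0, fun h' => absurd h' h⟩
  choose v hv using hrep
  let e : W ≃ₗ[F] (Fin 3 → F) := LinearEquiv.ofFinrankEq _ _ (by rw [hW]; simp)
  obtain ⟨g, hg⟩ := LinearMap.exists_extend e.toLinearMap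
  have hge : ∀ x (hx : x ∈ W), g x = e ⟨x, hx⟩ := fun x hx => by
    have := LinearMap.congr_fun hg ⟨x, hx⟩
    simpa using this
  have hginj : ∀ x ∈ W, ∀ y ∈ W, g x = g y → x = y := by
    intro x hx y hy h
    rw [hge x hx, hge y hy] at h
    exact congrArg Subtype.val (e.injective h)
  have hvW : ∀ P : Submodule F V, finrank F P = 1 → P ≤ W → v P ∈ W := by
    intro P hP hPW
    have := (hv P hP).2
    rw [this, Submodule.span_singleton_le_iff_mem] at hPW
    exact hPW
  have hgne : ∀ P : Submodule F V, finrank F P = 1 → P ≤ W → g (v P) ≠ 0 := by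
    intro P hP hPW h
    exact (hv P hP).1 (hginj _ (hvW P hP hPW) 0 W.zero_mem (by rw [h, map_zero]))
  have hgs : ∀ P R : Submodule F V, finrank F P = 1 → P ≤ W → finrank F R = 1 → R ≤ W → R ≠ P →
      ∀ c : F, g (v R) ≠ c • g (v P) := by
    intro P R hP hPW hR hRW hne c hc
    rw [← map_smul] at hc
    have := hginj _ (hvW R hR hRW) _ (W.smul_mem c (hvW P hP hPW)) hc
    apply hne
    apply pt_le_pt hP hR
    rw [(hv R hR).2, Submodule.span_singleton_le_iff_mem, this]
    refine Submodule.smul_mem _ _ ?_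
    rw [← Submodule.span_singleton_le_iff_mem]
    exact (hv P hP).2.symm.le
  have hdep : ∀ P Q R : Submodule F V, finrank F P = 1 → P ≤ W → finrank F Q = 1 → Q ≤ W → finrank F R = 1 →
      R ≤ W → Q ≠ P → det3 (g (v P)) (g (v Q)) (g (v R)) = 0 → R ≤ P ⊔ Q := by
    intro P Q R hP hPW hQ hQW hR hRW hne hd
    obtain ⟨a, b, hab⟩ := det3_dep hd (hgne P hP hPW) (hgs P Q hP hPW hQ hQW hne)
    rw [← map_smul, ← map_smul, ← map_add] at hab
    have := hginj _ (hvW R hR hRW) _ (W.add_mem (W.smul_mem a (hvW P hP hPW))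
      (W.smul_mem b (hvW Q hQ hQW))) hab
    rw [(hv R hR).2, Submodule.span_singleton_le_iff_mem, this]
    refine Submodule.add_mem _ (Submodule.smul_mem _ _ ?_) (Submodule.smul_mem _ _ ?_)
    · apply (le_sup_left : P ≤ P ⊔ Q)
      rw [← Submodule.span_singleton_le_iff_mem]
      exact (hv P hP).2.symm.le
    · apply (le_sup_right : Q ≤ P ⊔ Q)
      rw [← Submodule.span_singleton_le_iff_mem]
      exact (hv Q hQ).2.symm.le
  have hinj : ∀ P ∈ sec C W, ∀ R ∈ sec C W, g (v P) = g (v R) → P = R := by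
    intro P hP R hR h
    rw [mem_sec] at hP hR
    by_contra hne
    exact hgs R P (hC.pt R hR.1) hR.2 (hC.pt P hP.1) hP.2 hne 1 (by rw [one_smul]; exact h)
  have hJC : sec (jn C N) W ⊆ sec C W := by
    intro P hP
    rw [mem_sec, mem_jn] at hP
    exact mem_sec.2 ⟨hP.1.1, hP.2⟩
  have key := segre_vec ((sec C W).image (fun P => g (v P))) (by
      intro x hx y hy z hz hxy hxz hyz
      obtain ⟨P, hP, rfl⟩ := Finset.mem_image.1 hx
      obtain ⟨Q, hQ, rfl⟩ := Finset.mem_image.1 hy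
      obtain ⟨R, hR, rfl⟩ := Finset.mem_image.1 hz
      rw [mem_sec] at hP hQ hR
      have h1 : P ≠ Q := fun h => hxy (by rw [h])
      have h2 : P ≠ R := fun h => hxz (by rw [h])
      have h3 : Q ≠ R := fun h => hyz (by rw [h])
      intro hd
      exact hC.nc P hP.1 Q hQ.1 R hR.1 h1 h2 h3
        (hdep P Q R (hC.pt _ hP.1) hP.2 (hC.pt _ hQ.1) hQ.2 (hC.pt _ hR.1) hR.2 h1.symm hd))
    (g (v N)) (g (v A)) (g (v B)) (Finset.mem_image_of_mem _ (mem_sec.2 ⟨hA, hAW⟩))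
    (Finset.mem_image_of_mem _ (mem_sec.2 ⟨hB, hBW⟩))
    (fun h => hAB (hinj A (mem_sec.2 ⟨hA, hAW⟩) B (mem_sec.2 ⟨hB, hBW⟩) h))
    (by
      have hmem : v N ∈ A ⊔ B := by
        rw [(hv N hN1).2, Submodule.span_singleton_le_iff_mem] at hNAB
        exact hNAB
      rw [(hv A (hC.pt A hA)).2, (hv B (hC.pt B hB)).2, Submodule.mem_sup] at hmem
      obtain ⟨y, hy, z, hz, hyz⟩ := hmem
      obtain ⟨a, rfl⟩ := Submodule.mem_span_singleton.1 hy
      obtain ⟨b, rfl⟩ := Submodule.mem_span_singleton.1 hz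
      rw [← hyz, map_add, map_smul, map_smul]
      exact det3_of_dep _ _ a b)
    ((sec (jn C N) W).image (fun P => g (v P))) (Finset.image_subset_image hJC)
    (by
      intro x hx y hy hyx hd
      obtain ⟨P, hP, rfl⟩ := Finset.mem_image.1 hx
      obtain ⟨R, hR, rfl⟩ := Finset.mem_image.1 hy
      rw [mem_sec, mem_jn] at hP
      rw [mem_sec] at hR
      have hRP : R ≠ P := fun h => hyx (by rw [h])
      have hNP : N ≠ P := fun h => hNC (h ▸ hP.1.1)
      rw [det3_swap23] at hd
      exact hP.1.2 R hR.1 hRP (hdep P N R (hC.pt _ hP.1.1) hP.2 hN1 hNW (hC.pt _ hR.1) hR.2 hNP hd))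
  rw [Finset.card_image_of_injOn (fun P hP R hR h => hinj P hP R hR h),
    Finset.card_image_of_injOn (fun P hP R hR h => hinj P (hJC hP) R (hJC hR) h)] at key
  exact key

theorem segre_sum [CharP F 2] {C : Finset (Submodule F V)} (hC : Cap C)
    {W N A B : Submodule F V} (hN1 : finrank F N = 1)
    (hNC : N ∉ C) (hA : A ∈ C) (hB : B ∈ C) (hAW : A ≤ W) (hBW : B ≤ W) (hAB : A ≠ B)
    (hNAB : N ≤ A ⊔ B) :
    (sec C W).card + (sec (jn C N) W).card ≤
      Fintype.card F * (cov (A ⊔ B) W).card + 2 := by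
  have hA1 := hC.pt A hA
  have hB1 := hC.pt B hB
  have hL := fr_line hA1 hB1 hAB.symm
  have hNA : N ≠ A := fun h => hNC (h ▸ hA)
  have hNB : N ≠ B := fun h => hNC (h ▸ hB)
  have hAJ : A ∉ jn C N := fun h =>
    (mem_jn.1 h).2 B hB hAB.symm (exch hA1 hB1 hN1 hNA hNAB)
  have hBJ : B ∉ jn C N := fun h =>
    (mem_jn.1 h).2 A hA hAB (exch hB1 hA1 hN1 hNB (by rw [sup_comm]; exact hNAB))
  have honL : ∀ R ∈ C, R ≤ A ⊔ B → R = A ∨ R = B := by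
    intro R hR hRL
    by_contra hcon
    push Not at hcon
    exact hC.nc A hA B hB R hR hAB (Ne.symm hcon.1) (Ne.symm hcon.2) hRL
  have hLW : A ⊔ B ≤ W := sup_le hAW hBW
  have f1 := fiber (U := A ⊔ B) (W := W) (((sec C W).erase A).erase B) id (by
    intro R hR
    simp only [Finset.mem_erase, mem_sec] at hR
    refine cov_of_pt (hC.pt R hR.2.2.1) hLW hR.2.2.2 fun h => ?_
    rcases honL R hR.2.2.1 h with h | h
    · exact hR.2.1 h
    · exact hR.1 h) (fun _ => 1)
  have f2 := fiber (U := A ⊔ B) (W := W) (sec (jn C N) W) id (by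
    intro R hR
    rw [mem_sec] at hR
    have hRC := (mem_jn.1 hR.1).1
    refine cov_of_pt (hC.pt R hRC) hLW hR.2 fun h => ?_
    rcases honL R hRC h with h | h
    · exact hAJ (h ▸ hR.1)
    · exact hBJ (h ▸ hR.1)) (fun _ => 1)
  simp only [Finset.sum_const, smul_eq_mul, mul_one, id] at f1 f2
  have hBm : B ∈ (sec C W).erase A := Finset.mem_erase.2 ⟨hAB.symm, mem_sec.2 ⟨hB, hBW⟩⟩
  have c1 := Finset.card_erase_add_one hBm
  have c2 := Finset.card_erase_add_one (show A ∈ sec C W from mem_sec.2 ⟨hA, hAW⟩)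
  have hsum : ∑ X ∈ cov (A ⊔ B) W, ((((((sec C W).erase A).erase B).filter
      (fun Y => Y ≤ X)).card) + ((sec (jn C N) W).filter (fun Y => Y ≤ X)).card) ≤
      ∑ X ∈ cov (A ⊔ B) W, Fintype.card F := by
    refine Finset.sum_le_sum fun X hX => ?_
    rw [mem_cov] at hX
    have hAX : A ≤ X := le_sup_left.trans hX.1
    have hBX : B ≤ X := le_sup_right.trans hX.1
    have h := segre_plane hC (W := X) (by omega) hN1 (hNAB.trans hX.1) hNC hA hB hAX hBX hAB hNAB
    have e1 : (((sec C W).erase A).erase B).filter (fun Y => Y ≤ X) =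
        ((sec C X).erase A).erase B := by
      ext R
      simp only [Finset.mem_filter, Finset.mem_erase, mem_sec]
      have : R ≤ X → R ≤ W := fun h => h.trans hX.2.1
      tauto
    have e2 : (sec (jn C N) W).filter (fun Y => Y ≤ X) = sec (jn C N) X := by
      ext R
      simp only [Finset.mem_filter, mem_sec]
      have : R ≤ X → R ≤ W := fun h => h.trans hX.2.1
      tauto
    have hBm : B ∈ (sec C X).erase A := Finset.mem_erase.2 ⟨hAB.symm, mem_sec.2 ⟨hB, hBX⟩⟩
    have d1 := Finset.card_erase_add_one hBm
    have d2 := Finset.card_erase_add_one (show A ∈ sec C X from mem_sec.2 ⟨hA, hAX⟩)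
    rw [e1, e2]
    omega
  rw [Finset.sum_add_distrib, ← f1, ← f2, Finset.sum_const, smul_eq_mul, mul_comm] at hsum
  omega

end SegreProj
end CapAux

namespace CapAux
section Solid
open scoped Classical
set_option linter.unusedSectionVars false

variable {F V : Type*} [Field F] [Fintype F] [AddCommGroup V] [Module F V] [Finite V]

/-- The planes through `P` in `D`. -/
noncomputable def planes (P D : Submodule F V) : Finset (Submodule F V) :=
  (Set.toFinite {X : Submodule F V | P ≤ X ∧ X ≤ D ∧ finrank F X = 3}).toFinset

lemma mem_planes {P D X : Submodule F V} :
    X ∈ planes P D ↔ P ≤ X ∧ X ≤ D ∧ finrank F X = 3 := by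
  simp [planes]

/-- A cap in the solid `D` which is complete there. -/
structure SolidCap (C : Finset (Submodule F V)) (D : Submodule F V) : Prop where
  cap : Cap C
  fr : finrank F D = 4
  le : ∀ P ∈ C, P ≤ D
  compl : ∀ N : Submodule F V, finrank F N = 1 → N ≤ D → N ∉ C →
    ∃ A ∈ C, ∃ B ∈ C, A ≠ B ∧ N ≤ A ⊔ B

lemma SolidCap.sec_eq {C : Finset (Submodule F V)} {D : Submodule F V} (h : SolidCap C D) :
    sec C D = C := by
  ext P; rw [mem_sec]; exact ⟨fun h => h.1, fun hP => ⟨hP, h.le P hP⟩⟩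

lemma SolidCap.card_t {C : Finset (Submodule F V)} {D P : Submodule F V} (h : SolidCap C D)
    (hP : P ∈ C) : (tng C P D).card + C.card = Fintype.card F ^ 2 + Fintype.card F + 2 := by
  have h1 := card_tng h.cap hP (h.le P hP)
  rw [h.sec_eq, card_cov3 (h.le P hP) (by rw [h.fr, h.cap.pt P hP])] at h1
  omega

lemma card_tw {C : Finset (Submodule F V)} (hC : Cap C) {P X : Submodule F V}
    (hP : P ∈ C) (hPX : P ≤ X) (hX : finrank F X = 3) :
    (tng C P X).card + (sec C X).card = Fintype.card F + 2 := by
  have h1 := card_tng hC hP hPX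
  rw [card_cov2 hPX (by rw [hX, hC.pt P hP])] at h1
  omega

/-- Points on a line. -/
lemma mem_ptsl {l R : Submodule F V} :
    R ∈ cov ⊥ l ↔ R ≤ l ∧ finrank F R = 1 := by
  rw [mem_cov, finrank_bot]; simp

lemma good_count {C : Finset (Submodule F V)} {D P l X : Submodule F V} (h : SolidCap C D)
    (hP : P ∈ C) (hl : l ∈ tng C P D) (hX : X ∈ C) (hXP : X ≠ P) :
    Fintype.card F + 2 ≤ (((cov ⊥ l).erase P).filter (fun R => X ∈ jn C R)).card +
      (sec C (l ⊔ X)).card := by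
  have hl' := mem_tng.1 hl
  have hlc := mem_cov.1 hl'.1
  have hP1 := h.cap.pt P hP
  have hX1 := h.cap.pt X hX
  have hlf : finrank F l = 2 := by omega
  have hXl : ¬ X ≤ l := fun hh => hXP (hl'.2 X hX hh)
  have hcard : ((cov ⊥ l).erase P).card = Fintype.card F := by
    have h1 := Finset.card_erase_add_one (mem_ptsl.2 ⟨hlc.1, hP1⟩)
    rw [card_cov2 bot_le (by rw [hlf, finrank_bot])] at h1
    omega
  have hsplit := Finset.card_filter_add_card_filter_not (s := (cov ⊥ l).erase P)
    (fun R => X ∈ jn C R)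
  have hbad : (((cov ⊥ l).erase P).filter (fun R => ¬ X ∈ jn C R)).card + 2 ≤
      (sec C (l ⊔ X)).card := by
    have hPs : P ∈ sec C (l ⊔ X) := mem_sec.2 ⟨hP, hlc.1.trans le_sup_left⟩
    have hXs : X ∈ (sec C (l ⊔ X)).erase P :=
      Finset.mem_erase.2 ⟨hXP, mem_sec.2 ⟨hX, le_sup_right⟩⟩
    have c1 := Finset.card_erase_add_one hPs
    have c2 := Finset.card_erase_add_one hXs
    have hex : ∀ R, ∃ Y, R ∈ ((cov ⊥ l).erase P).filter (fun R => ¬ X ∈ jn C R) →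
        Y ∈ C ∧ Y ≠ X ∧ Y ≤ X ⊔ R := by
      intro R
      by_cases hR : R ∈ ((cov ⊥ l).erase P).filter (fun R => ¬ X ∈ jn C R)
      · have := (Finset.mem_filter.1 hR).2
        rw [mem_jn] at this
        push Not at this
        obtain ⟨Y, hY1, hY2, hY3⟩ := this hX
        exact ⟨Y, fun _ => ⟨hY1, hY2, hY3⟩⟩
      · exact ⟨⊥, fun hh => absurd hh hR⟩
    choose y hy using hex
    have hlines : ∀ R S : Submodule F V, finrank F R = 1 → finrank F S = 1 → R ≠ S → R ≤ l → S ≤ l →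
        ∀ m : Submodule F V, finrank F m = 2 → R ≤ m → S ≤ m → X ≤ m → False := by
      intro R S hR hS hRS hRl hSl m hm hRm hSm hXm
      have e := fr_line hR hS hRS.symm
      have e1 : R ⊔ S = l := eq_of_le_fr (sup_le hRl hSl) (by omega)
      have e2 : R ⊔ S = m := eq_of_le_fr (sup_le hRm hSm) (by omega)
      exact hXl (by rw [← e1, e2]; exact hXm)
    have hle : (((cov ⊥ l).erase P).filter (fun R => ¬ X ∈ jn C R)).card ≤
        (((sec C (l ⊔ X)).erase P).erase X).card := by
      refine Finset.card_le_card_of_injOn y ?_ ?_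
      · intro R hR
        obtain ⟨hY1, hY2, hY3⟩ := hy R hR
        have hR' := Finset.mem_filter.1 hR
        rw [Finset.mem_erase, mem_ptsl] at hR'
        have hRX : R ≠ X := fun hh => hXl (hh ▸ hR'.1.2.1)
        refine Finset.mem_erase.2 ⟨hY2, Finset.mem_erase.2 ⟨?_, mem_sec.2 ⟨hY1, ?_⟩⟩⟩
        · intro hYP
          rw [hYP] at hY3
          exact hlines P R hP1 hR'.1.2.2 (Ne.symm hR'.1.1) hlc.1 hR'.1.2.1 (X ⊔ R)
            (fr_line hX1 hR'.1.2.2 hRX) hY3 le_sup_right le_sup_left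
        · exact hY3.trans (sup_le le_sup_right (hR'.1.2.1.trans le_sup_left))
      · intro R hR S hS hRS
        obtain ⟨hY1, hY2, hY3⟩ := hy R hR
        obtain ⟨hZ1, hZ2, hZ3⟩ := hy S hS
        rw [← hRS] at hZ3
        have hR' := Finset.mem_filter.1 hR
        have hS' := Finset.mem_filter.1 hS
        rw [Finset.mem_erase, mem_ptsl] at hR' hS'
        by_contra hne
        have hY := h.cap.pt _ hY1
        exact hlines R S hR'.1.2.2 hS'.1.2.2 hne hR'.1.2.1 hS'.1.2.1 (X ⊔ y R)
          (fr_line hX1 hY hY2) (exch hX1 hR'.1.2.2 hY hY2 hY3)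
          (exch hX1 hS'.1.2.2 hY hY2 hZ3) le_sup_left
    omega
  omega

lemma key_ineq [CharP F 2] {C : Finset (Submodule F V)} {D P l : Submodule F V}
    (h : SolidCap C D) (hP : P ∈ C) (hl : l ∈ tng C P D) :
    Fintype.card F ^ 2 + Fintype.card F + 1 ≤ (tng C P D).card +
      ∑ X ∈ cov l D, ((tng C P X).card - 1) ^ 2 := by
  have ht := h.card_t hP
  have hl' := mem_tng.1 hl
  have hlc := mem_cov.1 hl'.1
  have hP1 := h.cap.pt P hP
  have hlf : finrank F l = 2 := by omega
  set q := Fintype.card F with hq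
  set t := (tng C P D).card with htd
  have hcard : ((cov ⊥ l).erase P).card = q := by
    have h1 := Finset.card_erase_add_one (mem_ptsl.2 ⟨hlc.1, hP1⟩)
    rw [card_cov2 bot_le (by rw [hlf, finrank_bot])] at h1
    omega
  -- upper bound
  have hup : ∑ R ∈ (cov ⊥ l).erase P, (jn C R).card ≤ q * t := by
    rw [← hcard, ← smul_eq_mul]
    refine Finset.sum_le_card_nsmul _ _ _ fun R hR => ?_
    rw [Finset.mem_erase, mem_ptsl] at hR
    have hRC : R ∉ C := fun hh => hR.1 (hl'.2 R hh hR.2.1)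
    obtain ⟨A, hA, B, hB, hAB, hRAB⟩ := h.compl R hR.2.2 (hR.2.1.trans hlc.2.1) hRC
    have hs := segre_sum h.cap (W := D) hR.2.2 hRC hA hB (h.le A hA) (h.le B hB) hAB hRAB
    rw [h.sec_eq, card_cov2 (sup_le (h.le A hA) (h.le B hB))
      (by rw [fr_line (h.cap.pt A hA) (h.cap.pt B hB) hAB.symm, h.fr])] at hs
    have : sec (jn C R) D = jn C R := by
      ext P; rw [mem_sec]
      exact ⟨fun h => h.1, fun hP => ⟨hP, h.le P (mem_jn.1 hP).1⟩⟩
    rw [this, ← hq] at hs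
    have : q * (q + 1) = q ^ 2 + q := by ring
    omega
  have hswap : ∑ R ∈ (cov ⊥ l).erase P, (jn C R).card =
      ∑ X ∈ C, (((cov ⊥ l).erase P).filter (fun R => X ∈ jn C R)).card := by
    have e := Finset.sum_card_bipartiteAbove_eq_sum_card_bipartiteBelow (s := C)
      (t := (cov ⊥ l).erase P) (fun X R => X ∈ jn C R)
    refine Eq.trans ?_ e.symm
    refine Finset.sum_congr rfl fun R _ => ?_
    congr 1
    ext X
    rw [Finset.mem_bipartiteBelow]
    exact ⟨fun hh => ⟨(mem_jn.1 hh).1, hh⟩, fun hh => hh.2⟩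
  rw [hswap, ← Finset.add_sum_erase _ _ hP] at hup
  have hPall : (((cov ⊥ l).erase P).filter (fun R => P ∈ jn C R)).card = q := by
    rw [← hcard]
    congr 1
    refine Finset.filter_true_of_mem fun R hR => ?_
    rw [Finset.mem_erase, mem_ptsl] at hR
    refine mem_jn.2 ⟨hP, fun Y hY hYP hYR => hYP (hl'.2 Y hY ?_)⟩
    exact hYR.trans (sup_le hlc.1 hR.2.1)
  rw [hPall] at hup
  have hcovX : ∀ X ∈ C.erase P, l ⊔ id X ∈ cov l D := by
    intro X hX
    rw [Finset.mem_erase] at hX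
    exact cov_of_pt (h.cap.pt X hX.2) hlc.2.1 (h.le X hX.2) (fun hh => hX.1 (hl'.2 X hX.2 hh))
  have hf := fiber (C.erase P) id hcovX
    (fun X => (((cov ⊥ l).erase P).filter (fun R => X ∈ jn C R)).card)
  have hf1 := fiber (C.erase P) id hcovX (fun _ => 1)
  simp only [Finset.sum_const, smul_eq_mul, mul_one, id] at hf1 hf
  have hcs : ∀ X ∈ cov l D, ((C.erase P).filter (fun Y => Y ≤ X)).card +
      ((tng C P X).card - 1) = q ∧ 1 ≤ (tng C P X).card := by
    intro X hX
    have hX' := mem_cov.1 hX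
    have hPX := hlc.1.trans hX'.1
    have h1 := card_tw h.cap hP hPX (by omega)
    have h2 : ((C.erase P).filter (fun Y => Y ≤ X)) = (sec C X).erase P := by
      ext Y; simp only [Finset.mem_filter, Finset.mem_erase, mem_sec]; tauto
    have h3 := Finset.card_erase_add_one (mem_sec.2 ⟨hP, hPX⟩)
    have h4 : 1 ≤ (tng C P X).card :=
      Finset.card_pos.2 ⟨l, mem_tng.2 ⟨mem_cov.2 ⟨hlc.1, hX'.1, hlc.2.2⟩, hl'.2⟩⟩
    rw [h2]
    exact ⟨by omega, h4⟩
  have hlow : ∑ X ∈ cov l D, ((C.erase P).filter (fun Y => Y ≤ X)).card *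
      ((tng C P X).card - 1 + 1) ≤ ∑ X ∈ C.erase P,
        (((cov ⊥ l).erase P).filter (fun R => X ∈ jn C R)).card := by
    rw [hf]
    refine Finset.sum_le_sum fun X hX => ?_
    rw [← smul_eq_mul]
    refine Finset.card_nsmul_le_sum _ _ _ fun Y hY => ?_
    rw [Finset.mem_filter, Finset.mem_erase] at hY
    have hX' := mem_cov.1 hX
    have hYl : ¬ Y ≤ l := fun hh => hY.1.1 (hl'.2 Y hY.1.2 hh)
    have e := sup_eq_cov hYl hY.2 hX'.1 hX'.2.2
    have h1 := good_count h hP hl hY.1.2 hY.1.1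
    rw [e, ← hq] at h1
    have h2 := card_tw h.cap hP (hlc.1.trans hX'.1) (by omega)
    have h3 := (hcs X hX).2
    omega
  have hid : ∑ X ∈ cov l D, ((C.erase P).filter (fun Y => Y ≤ X)).card * ((tng C P X).card - 1 + 1)
      + ∑ X ∈ cov l D, ((tng C P X).card - 1) ^ 2 + ∑ X ∈ cov l D, ((tng C P X).card - 1) =
      q * (q + 1) + q * ∑ X ∈ cov l D, ((tng C P X).card - 1) := by
    have e : q * (q + 1) = ∑ X ∈ cov l D, q := by
      rw [Finset.sum_const, card_cov2 hlc.2.1 (by rw [h.fr, hlf]), smul_eq_mul, mul_comm]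
    rw [e, Finset.mul_sum, ← Finset.sum_add_distrib, ← Finset.sum_add_distrib,
      ← Finset.sum_add_distrib]
    refine Finset.sum_congr rfl fun X hX => ?_
    have := (hcs X hX).1
    rw [← this]; ring
  have hsc : (C.erase P).card + ∑ X ∈ cov l D, ((tng C P X).card - 1) = q * (q + 1) := by
    rw [hf1, ← Finset.sum_add_distrib, Finset.sum_congr rfl (fun X hX => (hcs X hX).1),
      Finset.sum_const, card_cov2 hlc.2.1 (by rw [h.fr, hlf]), smul_eq_mul, mul_comm]
  have hm := Finset.card_erase_add_one hP
  have hs : ∑ X ∈ cov l D, ((tng C P X).card - 1) + 1 = t := by nlinarith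
  rw [← hs] at hup ⊢
  nlinarith

end Solid
end CapAux

namespace CapAux
section Solid2
open scoped Classical
set_option linter.unusedSectionVars false

variable {F V : Type*} [Field F] [Fintype F] [AddCommGroup V] [Module F V] [Finite V]

lemma fr_inf_planes {a b D : Submodule F V} (hD : finrank F D = 4) (ha : finrank F a = 3)
    (hb : finrank F b = 3) (haD : a ≤ D) (hbD : b ≤ D) (hab : a ≠ b) :
    finrank F (a ⊓ b : Submodule F V) = 2 := by
  have h1 := Submodule.finrank_sup_add_finrank_inf_eq a b
  have h2 : ¬ b ≤ a := fun h => hab (eq_of_le_fr h (by omega)).symm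
  have h3 : finrank F a < finrank F (a ⊔ b : Submodule F V) :=
    Submodule.finrank_lt_finrank_of_lt (left_lt_sup.2 h2)
  have h4 := fr_mono (sup_le haD hbD)
  omega

lemma fr_sup_lines {P l l' : Submodule F V} (hP : finrank F P = 1) (hl : finrank F l = 2)
    (hl' : finrank F l' = 2) (hPl : P ≤ l) (hPl' : P ≤ l') (hne : l ≠ l') :
    finrank F (l ⊔ l' : Submodule F V) = 3 := by
  have h1 := Submodule.finrank_sup_add_finrank_inf_eq l l'
  have h2 : ¬ l' ≤ l := fun h => hne (eq_of_le_fr h (by omega)).symm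
  have h3 : finrank F l < finrank F (l ⊔ l' : Submodule F V) :=
    Submodule.finrank_lt_finrank_of_lt (left_lt_sup.2 h2)
  have h4 := fr_mono (le_inf hPl hPl')
  omega

lemma cov_inter {P a b D l : Submodule F V} (hP : finrank F P = 1) (hD : finrank F D = 4)
    (ha : a ∈ planes P D) (hb : b ∈ planes P D) (hab : a ≠ b) :
    (l ∈ cov P a ∧ l ≤ b) ↔ l = a ⊓ b := by
  rw [mem_planes] at ha hb
  have h := fr_inf_planes hD ha.2.2 hb.2.2 ha.2.1 hb.2.1 hab
  rw [mem_cov]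
  constructor
  · rintro ⟨⟨h1, h2, h3⟩, h5⟩
    exact eq_of_le_fr (le_inf h2 h5) (by omega)
  · rintro rfl
    exact ⟨⟨le_inf ha.1 hb.1, inf_le_left, by omega⟩, inf_le_right⟩

lemma tng_eq {C : Finset (Submodule F V)} {P D X : Submodule F V} (hX : X ≤ D) :
    tng C P X = (tng C P D).filter (fun l => l ≤ X) := by
  ext l
  rw [Finset.mem_filter, mem_tng, mem_tng, mem_cov, mem_cov]
  constructor
  · rintro ⟨⟨h1, h2, h3⟩, h4⟩; exact ⟨⟨⟨h1, h2.trans hX, h3⟩, h4⟩, h2⟩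
  · rintro ⟨⟨⟨h1, h2, h3⟩, h4⟩, h5⟩; exact ⟨⟨h1, h5, h3⟩, h4⟩

lemma cls [CharP F 2] {C : Finset (Submodule F V)} {D P : Submodule F V}
    (hq : 2048 ≤ Fintype.card F) (h : SolidCap C D) (hP : P ∈ C)
    (hne : (tng C P D).Nonempty) (ht : (tng C P D).card + 20 ≤ 3 * Fintype.card F) :
    (∃ a ∈ planes P D, tng C P D = tng C P a ∧ (tng C P D).card = Fintype.card F + 1) ∨
    (∃ a ∈ planes P D, ∃ b ∈ planes P D, a ≠ b ∧ tng C P D ⊆ cov P a ∪ cov P b ∧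
      2 * Fintype.card F ≤ (tng C P D).card) := by
  have hP1 := h.cap.pt P hP
  have key := tl (Fintype.card F) hq (tng C P D) (planes P D) (fun X => tng C P X)
    (by
      intro x hx y hy hxy
      have hx' := mem_cov.1 (mem_tng.1 hx).1
      have hy' := mem_cov.1 (mem_tng.1 hy).1
      have hs : x ⊔ y ≤ D := sup_le hx'.2.1 hy'.2.1
      refine ⟨x ⊔ y, mem_planes.2 ⟨hx'.1.trans le_sup_left, hs,
        fr_sup_lines hP1 (by omega) (by omega) hx'.1 hy'.1 hxy⟩, ?_, ?_⟩
      · simp only [tng_eq hs, Finset.mem_filter]; exact ⟨hx, le_sup_left⟩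
      · simp only [tng_eq hs, Finset.mem_filter]; exact ⟨hy, le_sup_right⟩)
    (by
      intro a ha b hb hab
      rw [Finset.card_le_one]
      have aux : ∀ l ∈ tng C P a ∩ tng C P b, l = a ⊓ b := by
        intro l hl
        rw [Finset.mem_inter, mem_tng, mem_tng] at hl
        exact (cov_inter hP1 h.fr ha hb hab).1 ⟨hl.1.1, (mem_cov.1 hl.2.1).2.1⟩
      intro x hx y hy
      rw [aux x hx, aux y hy])
    (by
      intro a ha
      simp only [tng_eq (mem_planes.1 ha).2.1]
      exact Finset.filter_subset _ _)
    (by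
      intro a ha
      rw [mem_planes] at ha
      rw [← card_cov2 ha.1 (by omega)]
      exact Finset.card_le_card (Finset.filter_subset _ _))
    hne ht
    (by
      intro l hl
      have hk := key_ineq h hP hl
      have e : (planes P D).filter (fun b => l ∈ tng C P b) = cov l D := by
        have hl' := mem_cov.1 (mem_tng.1 hl).1
        ext X
        rw [Finset.mem_filter, mem_planes, mem_cov]
        constructor
        · rintro ⟨⟨h1, h2, h3⟩, h4⟩
          exact ⟨(mem_cov.1 (mem_tng.1 h4).1).2.1, h2, by omega⟩
        · rintro ⟨h1, h2, h3⟩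
          refine ⟨⟨hl'.1.trans h1, h2, by omega⟩, ?_⟩
          rw [tng_eq h2, Finset.mem_filter]
          exact ⟨hl, h1⟩
      rw [← e] at hk
      convert hk)
  rcases key with ⟨a, ha, h1, h2⟩ | ⟨a, ha, b, hb, h1, h2, h3⟩
  · exact Or.inl ⟨a, ha, h1, h2⟩
  · refine Or.inr ⟨a, ha, b, hb, h1, h2.trans ?_, h3⟩
    exact Finset.union_subset_union (Finset.filter_subset _ _) (Finset.filter_subset _ _)

/-- case A: all tangents lie in a plane -/
lemma caseA {C : Finset (Submodule F V)} {D P a b : Submodule F V}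
    (hq : 2048 ≤ Fintype.card F) (h : SolidCap C D) (hP : P ∈ C)
    (ha : a ∈ planes P D) (hT : tng C P D = tng C P a)
    (hc : (tng C P D).card = Fintype.card F + 1) (hb : b ∈ planes P D) :
    (sec C b).card ≠ Fintype.card F := by
  have hP1 := h.cap.pt P hP
  have hb' := mem_planes.1 hb
  have h1 := card_tw h.cap hP hb'.1 hb'.2.2
  by_cases hab : a = b
  · rw [← hab, ← hT, hc] at h1; rw [← hab]; omega
  · have : (tng C P b).card ≤ 1 := by
      rw [Finset.card_le_one]
      have aux : ∀ l ∈ tng C P b, l = a ⊓ b := by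
        intro l hl
        rw [tng_eq hb'.2.1, Finset.mem_filter, hT, mem_tng] at hl
        exact (cov_inter hP1 h.fr ha hb hab).1 ⟨hl.1.1, hl.2⟩
      intro x hx y hy
      rw [aux x hx, aux y hy]
    omega

lemma dvd_count {C : Finset (Submodule F V)} {D : Submodule F V} (h : SolidCap C D) (c n : ℕ)
    (hn : ∀ P ∈ C, ((planes P D).filter (fun b => (sec C b).card = c)).card = n) :
    c ∣ C.card * n := by
  have e := Finset.sum_card_bipartiteAbove_eq_sum_card_bipartiteBelow (s := C)
    (t := (planes ⊥ D).filter (fun b => (sec C b).card = c)) (fun P b => P ≤ b)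
  have e1 : ∑ P ∈ C, ((planes P D).filter (fun b => (sec C b).card = c)).card = C.card * n := by
    rw [Finset.sum_congr rfl hn, Finset.sum_const, smul_eq_mul]
  rw [← e1]
  have e2 : ∑ P ∈ C, ((planes P D).filter (fun b => (sec C b).card = c)).card =
    ∑ P ∈ C, (Finset.bipartiteAbove (fun P b => P ≤ b)
      ((planes ⊥ D).filter (fun b => (sec C b).card = c)) P).card := by
    refine Finset.sum_congr rfl fun P _ => ?_
    congr 1
    ext b
    simp only [Finset.mem_filter, Finset.mem_bipartiteAbove, mem_planes, bot_le, true_and]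
    tauto
  rw [e2, e]
  refine Finset.dvd_sum fun b hb => ?_
  have e3 : Finset.bipartiteBelow (fun P b => P ≤ b) C b = sec C b := by
    ext P
    rw [Finset.mem_bipartiteBelow, mem_sec]
  rw [e3, (Finset.mem_filter.1 hb).2]

section TwoPlanes

variable {D P a b : Submodule F V}

/-- the lines through `P` in one of two planes, restricted to a third plane -/
lemma two_filter (hP : finrank F P = 1) (hD : finrank F D = 4)
    (ha : a ∈ planes P D) (hb : b ∈ planes P D) {c : Submodule F V} (hc : c ∈ planes P D)
    (hca : c ≠ a) (hcb : c ≠ b) (l : Submodule F V) :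
    (l ∈ cov P a ∪ cov P b ∧ l ≤ c) ↔ (l = a ⊓ c ∨ l = b ⊓ c) := by
  rw [← cov_inter hP hD ha hc hca.symm, ← cov_inter hP hD hb hc hcb.symm, Finset.mem_union]
  tauto

lemma two_inf (hD : finrank F D = 4)
    (ha : a ∈ planes P D) (hb : b ∈ planes P D) (hab : a ≠ b) {c : Submodule F V}
    (hc : c ∈ planes P D) (hca : c ≠ a) (hcb : c ≠ b) :
    (a ⊓ b ≤ c → a ⊓ c = a ⊓ b ∧ b ⊓ c = a ⊓ b) ∧ (¬ a ⊓ b ≤ c → a ⊓ c ≠ b ⊓ c) := by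
  rw [mem_planes] at ha hb hc
  have h1 := fr_inf_planes hD ha.2.2 hb.2.2 ha.2.1 hb.2.1 hab
  have h2 := fr_inf_planes hD ha.2.2 hc.2.2 ha.2.1 hc.2.1 hca.symm
  have h3 := fr_inf_planes hD hb.2.2 hc.2.2 hb.2.1 hc.2.1 hcb.symm
  constructor
  · intro h
    exact ⟨(eq_of_le_fr (le_inf inf_le_left h) (by omega)).symm,
      (eq_of_le_fr (le_inf inf_le_right h) (by omega)).symm⟩
  · intro h heq
    have : a ⊓ c ≤ a ⊓ b := le_inf inf_le_left (heq ▸ inf_le_left)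
    have := eq_of_le_fr this (by omega)
    exact h (this ▸ inf_le_right)

lemma card_two (hP : finrank F P = 1) (hD : finrank F D = 4)
    (ha : a ∈ planes P D) (hb : b ∈ planes P D) (hab : a ≠ b) :
    (cov P a ∪ cov P b).card = 2 * Fintype.card F + 1 := by
  have h1 := Finset.card_union_add_card_inter (cov P a) (cov P b)
  have h2 : cov P a ∩ cov P b = {a ⊓ b} := by
    ext l
    rw [Finset.mem_inter, Finset.mem_singleton, ← cov_inter hP hD ha hb hab, mem_cov, mem_cov]
    tauto
  rw [mem_planes] at ha hb
  rw [h2, Finset.card_singleton, card_cov2 ha.1 (by omega), card_cov2 hb.1 (by omega)] at h1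
  omega

lemma card_sd (hP : finrank F P = 1) (hD : finrank F D = 4)
    (ha : a ∈ planes P D) (hb : b ∈ planes P D) (hab : a ≠ b) :
    ((cov (a ⊓ b) D).erase a |>.erase b).card + 1 = Fintype.card F := by
  rw [mem_planes] at ha hb
  have h1 := fr_inf_planes hD ha.2.2 hb.2.2 ha.2.1 hb.2.1 hab
  have m1 : a ∈ cov (a ⊓ b) D := mem_cov.2 ⟨inf_le_left, ha.2.1, by omega⟩
  have m2 : b ∈ (cov (a ⊓ b) D).erase a :=
    Finset.mem_erase.2 ⟨hab.symm, mem_cov.2 ⟨inf_le_right, hb.2.1, by omega⟩⟩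
  have e1 := Finset.card_erase_add_one m1
  have e2 := Finset.card_erase_add_one m2
  rw [card_cov2 (inf_le_left.trans ha.2.1) (by omega)] at e1
  omega

/-- planes through the line `o`, in terms of planes through `P` -/
lemma mem_sd (hP : finrank F P = 1) (hD : finrank F D = 4)
    (ha : a ∈ planes P D) (hb : b ∈ planes P D) (hab : a ≠ b) (c : Submodule F V) :
    c ∈ ((cov (a ⊓ b) D).erase a |>.erase b) ↔
      c ∈ planes P D ∧ c ≠ a ∧ c ≠ b ∧ a ⊓ b ≤ c := by
  rw [mem_planes] at *
  have h1 := fr_inf_planes hD ha.2.2 hb.2.2 ha.2.1 hb.2.1 hab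
  rw [Finset.mem_erase, Finset.mem_erase, mem_cov, h1]
  constructor
  · rintro ⟨h2, h3, h4, h5, h6⟩
    exact ⟨⟨(le_inf ha.1 hb.1).trans h4, h5, h6⟩, h3, h2, h4⟩
  · rintro ⟨⟨h2, h3, h4⟩, h5, h6, h7⟩
    exact ⟨h6, h5, h7, h3, h4⟩

end TwoPlanes

end Solid2
end CapAux

namespace CapAux
section Solid3
open scoped Classical
set_option linter.unusedSectionVars false

variable {F V : Type*} [Field F] [Fintype F] [AddCommGroup V] [Module F V] [Finite V]

/-- planes through `P` with a given number of cap points -/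
noncomputable def pw (C : Finset (Submodule F V)) (D P : Submodule F V) (c : ℕ) :
    Finset (Submodule F V) := (planes P D).filter (fun b => (sec C b).card = c)

variable {C : Finset (Submodule F V)} {D P a b : Submodule F V}

lemma mem_pw (h : SolidCap C D) (hP : P ∈ C) (c d : ℕ) (hcd : c + d = Fintype.card F + 2)
    (X : Submodule F V) :
    X ∈ pw C D P c ↔ X ∈ planes P D ∧ (tng C P X).card = d := by
  rw [pw, Finset.mem_filter]
  refine and_congr_right fun hX => ?_
  rw [mem_planes] at hX
  have := card_tw h.cap hP hX.1 hX.2.2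
  omega

lemma mem_tng_plane (hb : b ∈ planes P D) (l : Submodule F V) :
    l ∈ tng C P b ↔ l ∈ tng C P D ∧ l ≤ b := by
  rw [tng_eq (mem_planes.1 hb).2.1, Finset.mem_filter]

lemma caseB (hq : 2048 ≤ Fintype.card F) (h : SolidCap C D) (hP : P ∈ C)
    (ha : a ∈ planes P D) (hb : b ∈ planes P D) (hab : a ≠ b)
    (hT : tng C P D = cov P a ∪ cov P b) :
    (pw C D P (Fintype.card F + 1)).card + 1 = Fintype.card F := by
  have hP1 := h.cap.pt P hP
  suffices hset : pw C D P (Fintype.card F + 1) = ((cov (a ⊓ b) D).erase a |>.erase b) by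
    rw [hset]
    exact card_sd hP1 h.fr ha hb hab
  ext c
  rw [mem_pw h hP _ 1 rfl, mem_sd hP1 h.fr ha hb hab]
  refine and_congr_right fun hc => ?_
  constructor
  · intro h1
    have hne : ∀ e ∈ planes P D, cov P e ⊆ cov P a ∪ cov P b → c ≠ e := by
      rintro e he hs rfl
      have : cov P c ⊆ tng C P c := by
        intro l hl
        rw [mem_tng_plane hc, hT]
        exact ⟨hs hl, (mem_cov.1 hl).2.1⟩
      have := Finset.card_le_card this
      rw [mem_planes] at he
      rw [card_cov2 he.1 (by omega)] at this
      omega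
    have hca := hne a ha Finset.subset_union_left
    have hcb := hne b hb Finset.subset_union_right
    refine ⟨hca, hcb, ?_⟩
    by_contra ho
    have h2 := (two_inf h.fr ha hb hab hc hca hcb).2 ho
    refine h2 (Finset.card_le_one.1 h1.le _ ?_ _ ?_)
    · rw [mem_tng_plane hc, hT, two_filter hP1 h.fr ha hb hc hca hcb]; exact Or.inl rfl
    · rw [mem_tng_plane hc, hT, two_filter hP1 h.fr ha hb hc hca hcb]; exact Or.inr rfl
  · rintro ⟨hca, hcb, ho⟩
    have h2 := (two_inf h.fr ha hb hab hc hca hcb).1 ho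
    rw [Finset.card_eq_one]
    refine ⟨a ⊓ b, ?_⟩
    ext l
    rw [mem_tng_plane hc, hT, two_filter hP1 h.fr ha hb hc hca hcb, h2.1, h2.2,
      Finset.mem_singleton, or_self]

lemma caseI (hq : 2048 ≤ Fintype.card F) (h : SolidCap C D) (hP : P ∈ C)
    (ha : a ∈ planes P D) (hb : b ∈ planes P D) (hab : a ≠ b)
    (hT : tng C P D = (cov P a ∪ cov P b).erase (a ⊓ b)) :
    (pw C D P (Fintype.card F + 2)).card + 1 = Fintype.card F ∧
    ∀ E ∈ C, (pw C D E (Fintype.card F + 2)).Nonempty := by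
  have hP1 := h.cap.pt P hP
  have ha' := mem_planes.1 ha
  have hb' := mem_planes.1 hb
  have hof := fr_inf_planes h.fr ha'.2.2 hb'.2.2 ha'.2.1 hb'.2.1 hab
  have hcov : ∀ e ∈ planes P D, a ⊓ b ≤ e → cov P e ⊆ cov P a ∪ cov P b →
      (tng C P e).card = Fintype.card F := by
    intro e he ho hs
    have : tng C P e = (cov P e).erase (a ⊓ b) := by
      ext l
      rw [mem_tng_plane he, hT, Finset.mem_erase, Finset.mem_erase]
      constructor
      · rintro ⟨⟨h1, h2⟩, h3⟩
        refine ⟨h1, mem_cov.2 ?_⟩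
        rw [Finset.mem_union, mem_cov, mem_cov] at h2
        rcases h2 with h2 | h2
        · exact ⟨h2.1, h3, h2.2.2⟩
        · exact ⟨h2.1, h3, h2.2.2⟩
      · rintro ⟨h1, h2⟩
        exact ⟨⟨h1, hs h2⟩, (mem_cov.1 h2).2.1⟩
    rw [this]
    have hm : a ⊓ b ∈ cov P e := mem_cov.2 ⟨le_inf ha'.1 hb'.1, ho, by omega⟩
    have h1 := Finset.card_erase_add_one hm
    rw [mem_planes] at he
    rw [card_cov2 he.1 (by omega)] at h1
    omega
  have hta := hcov a ha inf_le_left Finset.subset_union_left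
  have htb := hcov b hb inf_le_right Finset.subset_union_right
  have hsd : pw C D P (Fintype.card F + 2) = ((cov (a ⊓ b) D).erase a |>.erase b) := by
    ext c
    rw [mem_pw h hP _ 0 rfl, mem_sd hP1 h.fr ha hb hab]
    refine and_congr_right fun hc => ?_
    constructor
    · intro h1
      have hca : c ≠ a := by rintro rfl; omega
      have hcb : c ≠ b := by rintro rfl; omega
      refine ⟨hca, hcb, ?_⟩
      by_contra ho
      rw [Finset.card_eq_zero] at h1
      have : a ⊓ c ∈ tng C P c := by
        have h3 := (two_filter hP1 h.fr ha hb hc hca hcb (a ⊓ c)).2 (Or.inl rfl)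
        rw [mem_tng_plane hc, hT, Finset.mem_erase]
        exact ⟨⟨fun hh => ho (hh ▸ inf_le_right), h3.1⟩, h3.2⟩
      rw [h1] at this
      simp at this
    · rintro ⟨hca, hcb, ho⟩
      have h2 := (two_inf h.fr ha hb hab hc hca hcb).1 ho
      rw [Finset.card_eq_zero, Finset.eq_empty_iff_forall_notMem]
      intro l hl
      rw [mem_tng_plane hc, hT, Finset.mem_erase, and_assoc,
        two_filter hP1 h.fr ha hb hc hca hcb, h2.1, h2.2, or_self] at hl
      exact hl.1 hl.2
  have hcard := card_sd hP1 h.fr ha hb hab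
  rw [← hsd] at hcard
  refine ⟨hcard, fun E hE => ?_⟩
  -- transfer of planes
  have htr : ∀ c, c ∈ planes P D → c ≠ a → c ≠ b → a ⊓ b ≤ c → E ≤ c →
      (pw C D E (Fintype.card F + 2)).Nonempty := by
    intro c hc hca hcb ho hEc
    have h1 : c ∈ pw C D P (Fintype.card F + 2) := by
      rw [hsd, mem_sd hP1 h.fr ha hb hab]; exact ⟨hc, hca, hcb, ho⟩
    rw [pw, Finset.mem_filter] at h1
    rw [mem_planes] at hc
    exact ⟨c, Finset.mem_filter.2 ⟨mem_planes.2 ⟨hEc, hc.2⟩, h1.2⟩⟩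
  by_cases hEo : E ≤ a ⊓ b
  · obtain ⟨c, hc⟩ : (pw C D P (Fintype.card F + 2)).Nonempty := Finset.card_pos.1 (by omega)
    rw [hsd, mem_sd hP1 h.fr ha hb hab] at hc
    exact htr c hc.1 hc.2.1 hc.2.2.1 hc.2.2.2 (hEo.trans hc.2.2.2)
  · have hocov : a ⊓ b ∈ cov P D :=
      mem_cov.2 ⟨le_inf ha'.1 hb'.1, inf_le_left.trans ha'.2.1, by omega⟩
    have hont : a ⊓ b ∉ tng C P D := by rw [hT]; simp
    rw [mem_tng] at hont
    push Not at hont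
    obtain ⟨B, hB, hBo, hBP⟩ := hont hocov
    have hE1 := h.cap.pt E hE
    have hfr := fr_sup_pt hE1 hEo
    have hc : (a ⊓ b) ⊔ E ∈ planes P D :=
      mem_planes.2 ⟨(le_inf ha'.1 hb'.1).trans le_sup_left,
        sup_le (inf_le_left.trans ha'.2.1) (h.le E hE), by omega⟩
    have hno : ∀ e ∈ planes P D, (tng C P e).card = Fintype.card F → (a ⊓ b) ⊔ E ≠ e := by
      rintro e he hte rfl
      have he' := mem_planes.1 he
      have h1 := card_tw h.cap hP he'.1 he'.2.2
      have hsub : ({P, B, E} : Finset (Submodule F V)) ⊆ sec C ((a ⊓ b) ⊔ E) := by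
        intro X hX
        simp only [Finset.mem_insert, Finset.mem_singleton] at hX
        rcases hX with rfl | rfl | rfl
        · exact mem_sec.2 ⟨hP, he'.1⟩
        · exact mem_sec.2 ⟨hB, hBo.trans le_sup_left⟩
        · exact mem_sec.2 ⟨hE, le_sup_right⟩
      have h2 := Finset.card_le_card hsub
      have h3 : ({P, B, E} : Finset (Submodule F V)).card = 3 := by
        rw [Finset.card_eq_three]
        exact ⟨P, B, E, Ne.symm hBP, fun hh => hEo (hh ▸ le_inf ha'.1 hb'.1),
          fun hh => hEo (hh ▸ hBo), rfl⟩
      omega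
    exact htr _ hc (hno a ha hta) (hno b hb htb) le_sup_left le_sup_right

lemma caseII (hq : 2048 ≤ Fintype.card F) (h : SolidCap C D) (hP : P ∈ C)
    (ha : a ∈ planes P D) (hb : b ∈ planes P D) (hab : a ≠ b) {X : Submodule F V}
    (hXa : X ∈ cov P a) (hXo : X ≠ a ⊓ b)
    (hT : tng C P D = (cov P a ∪ cov P b).erase X) :
    (pw C D P (Fintype.card F + 1)).card + 1 = 2 * Fintype.card F ∧
    pw C D P (Fintype.card F + 2) = ∅ := by
  have hP1 := h.cap.pt P hP
  have ha' := mem_planes.1 ha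
  have hb' := mem_planes.1 hb
  have hX := mem_cov.1 hXa
  have hof := fr_inf_planes h.fr ha'.2.2 hb'.2.2 ha'.2.1 hb'.2.1 hab
  have hcov : ∀ e ∈ planes P D, cov P e ⊆ cov P a ∪ cov P b →
      Fintype.card F ≤ (tng C P e).card := by
    intro e he hs
    have : (cov P e).erase X ⊆ tng C P e := by
      intro l hl
      rw [Finset.mem_erase] at hl
      rw [mem_tng_plane he, hT, Finset.mem_erase]
      exact ⟨⟨hl.1, hs hl.2⟩, (mem_cov.1 hl.2).2.1⟩
    have h1 := Finset.card_le_card this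
    have h2 := Finset.pred_card_le_card_erase (s := cov P e) (a := X)
    rw [mem_planes] at he
    rw [card_cov2 he.1 (by omega)] at h2
    omega
  have hta := hcov a ha Finset.subset_union_left
  have htb := hcov b hb Finset.subset_union_right
  -- the third planes
  have hmem : ∀ c ∈ planes P D, c ≠ a → c ≠ b → ∀ l, l ∈ tng C P c ↔
      l ≠ X ∧ (l = a ⊓ c ∨ l = b ⊓ c) := by
    intro c hc hca hcb l
    rw [mem_tng_plane hc, hT, Finset.mem_erase, and_assoc, two_filter hP1 h.fr ha hb hc hca hcb]
  have hXb : ∀ c, X ≠ b ⊓ c := by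
    intro c hh
    refine hXo (eq_of_le_fr (le_inf hX.2.1 (hh ▸ inf_le_left)) (by omega))
  have hXc : ∀ c ∈ planes P D, c ≠ a → (X = a ⊓ c ↔ X ≤ c) := by
    intro c hc hca
    rw [← cov_inter hP1 h.fr ha hc hca.symm]
    exact ⟨fun h => h.2, fun h => ⟨hXa, h⟩⟩
  have hbc : ∀ c ∈ planes P D, c ≠ a → c ≠ b → b ⊓ c ∈ tng C P c := by
    intro c hc hca hcb
    rw [hmem c hc hca hcb]
    exact ⟨(hXb c).symm, Or.inr rfl⟩
  have hXac : ∀ c, a ⊓ b ≤ c → X ≤ c → c ∈ planes P D → c = a := by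
    intro c ho hXc hc
    rw [mem_planes] at hc
    have h1 := fr_sup_lines hP1 (show finrank F X = 2 by omega) hof hX.1 (le_inf ha'.1 hb'.1) hXo
    have h2 : X ⊔ (a ⊓ b) = a := eq_of_le_fr (sup_le hX.2.1 inf_le_left) (by omega)
    have h3 : X ⊔ (a ⊓ b) = c := eq_of_le_fr (sup_le hXc ho) (by omega)
    rw [← h3, h2]
  constructor
  · have hset : pw C D P (Fintype.card F + 1) =
        ((cov (a ⊓ b) D).erase a |>.erase b) ∪ (cov X D).erase a := by
      ext c
      have hcX : c ∈ (cov X D).erase a ↔ c ∈ planes P D ∧ c ≠ a ∧ X ≤ c := by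
        rw [Finset.mem_erase, mem_cov, mem_planes]
        constructor
        · rintro ⟨h1, h2, h3, h4⟩
          exact ⟨⟨hX.1.trans h2, h3, by omega⟩, h1, h2⟩
        · rintro ⟨⟨h1, h2, h3⟩, h4, h5⟩
          exact ⟨h4, h5, h2, by omega⟩
      rw [mem_pw h hP _ 1 rfl, Finset.mem_union, mem_sd hP1 h.fr ha hb hab, hcX, ← and_or_left]
      refine and_congr_right fun hc => ?_
      constructor
      · intro h1
        have hca : c ≠ a := by rintro rfl; omega
        have hcb : c ≠ b := by rintro rfl; omega
        by_cases ho : a ⊓ b ≤ c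
        · exact Or.inl ⟨hca, hcb, ho⟩
        · right
          refine ⟨hca, ?_⟩
          rw [← hXc c hc hca]
          by_contra hne
          refine (two_inf h.fr ha hb hab hc hca hcb).2 ho
            (Finset.card_le_one.1 h1.le _ ?_ _ (hbc c hc hca hcb))
          rw [hmem c hc hca hcb]
          exact ⟨Ne.symm hne, Or.inl rfl⟩
      · rintro (⟨hca, hcb, ho⟩ | ⟨hca, hXle⟩)
        · have h2 := (two_inf h.fr ha hb hab hc hca hcb).1 ho
          rw [Finset.card_eq_one]
          refine ⟨b ⊓ c, ?_⟩
          ext l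
          rw [hmem c hc hca hcb, h2.1, h2.2, or_self, Finset.mem_singleton]
          exact ⟨fun hh => hh.2, fun hh => ⟨fun h3 => hXo (h3.symm.trans hh), hh⟩⟩
        · have hcb : c ≠ b := by
            rintro rfl
            exact hca (hXac c inf_le_right hXle hc)
          rw [Finset.card_eq_one]
          refine ⟨b ⊓ c, ?_⟩
          ext l
          rw [hmem c hc hca hcb, ← (hXc c hc hca).2 hXle, Finset.mem_singleton]
          constructor
          · rintro ⟨h1, h2 | h2⟩
            · exact absurd h2 h1
            · exact h2
          · intro h1
            exact ⟨fun h2 => hXb c (h2.symm.trans h1), Or.inr h1⟩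
    have hdis : Disjoint ((cov (a ⊓ b) D).erase a |>.erase b) ((cov X D).erase a) := by
      rw [Finset.disjoint_left]
      intro c h1 h2
      rw [mem_sd hP1 h.fr ha hb hab] at h1
      rw [Finset.mem_erase, mem_cov] at h2
      exact h2.1 (hXac c h1.2.2.2 h2.2.1 h1.1)
    have h1 := card_sd hP1 h.fr ha hb hab
    have h2 := Finset.card_erase_add_one (show a ∈ cov X D from
      mem_cov.2 ⟨hX.2.1, ha'.2.1, by omega⟩)
    rw [card_cov2 (hX.2.1.trans ha'.2.1) (by rw [h.fr]; omega)] at h2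
    rw [hset, Finset.card_union_of_disjoint hdis]
    omega
  · rw [Finset.eq_empty_iff_forall_notMem]
    intro c hc
    rw [mem_pw h hP _ 0 rfl] at hc
    have hca : c ≠ a := by rintro rfl; omega
    have hcb : c ≠ b := by rintro rfl; omega
    have := hbc c hc.1 hca hcb
    rw [Finset.card_eq_zero.1 hc.2] at this
    simp at this

lemma arithB (q m n : ℕ) (hq : 2048 ≤ q) (hm : m + q = q ^ 2 + 1) (hn : n + 1 = q)
    (hd : q + 1 ∣ m * n) : False := by
  have h1 : q + 1 ∣ m * n + 6 := by
    obtain ⟨p, rfl⟩ : ∃ p, q = p + 3 := ⟨q - 3, by omega⟩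
    have hm' : m = p ^ 2 + 5 * p + 7 := by nlinarith
    have hn' : n = p + 2 := by omega
    exact ⟨p ^ 2 + 3 * p + 5, by rw [hm', hn']; ring⟩
  have h2 := (Nat.dvd_add_right hd).1 h1
  have := Nat.le_of_dvd (by norm_num) h2
  omega

lemma arithI (q m n : ℕ) (hq : 2048 ≤ q) (hm : m + q = q ^ 2 + 2) (hn : n + 1 = q)
    (hd : q + 2 ∣ m * n) : False := by
  have h1 : q + 2 ∣ m * n + 24 := by
    obtain ⟨p, rfl⟩ : ∃ p, q = p + 4 := ⟨q - 4, by omega⟩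
    have hm' : m = p ^ 2 + 7 * p + 14 := by nlinarith
    have hn' : n = p + 3 := by omega
    exact ⟨p ^ 2 + 4 * p + 11, by rw [hm', hn']; ring⟩
  have h2 := (Nat.dvd_add_right hd).1 h1
  have := Nat.le_of_dvd (by norm_num) h2
  omega

lemma arithII (q m n : ℕ) (hq : 2048 ≤ q) (hm : m + q = q ^ 2 + 2) (hn : n + 1 = 2 * q)
    (hd : q + 1 ∣ m * n) : False := by
  have h1 : q + 1 ∣ m * n + 12 := by
    obtain ⟨p, rfl⟩ : ∃ p, q = p + 4 := ⟨q - 4, by omega⟩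
    have hm' : m = p ^ 2 + 7 * p + 14 := by nlinarith
    have hn' : n = 2 * p + 7 := by omega
    exact ⟨2 * p ^ 2 + 11 * p + 22, by rw [hm', hn']; ring⟩
  have h2 := (Nat.dvd_add_right hd).1 h1
  have := Nat.le_of_dvd (by norm_num) h2
  omega

theorem solid [CharP F 2] (hq : 2048 ≤ Fintype.card F) (h : SolidCap C D)
    (hm : Fintype.card F ^ 2 + 22 ≤ C.card + 2 * Fintype.card F)
    (hP : P ∈ C) (hb : b ∈ planes P D) : (sec C b).card ≠ Fintype.card F := by
  have hb' := mem_planes.1 hb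
  have htP := h.card_t hP
  rcases Finset.eq_empty_or_nonempty (tng C P D) with h0 | hne
  · have h1 := card_tw h.cap hP hb'.1 hb'.2.2
    rw [tng_eq hb'.2.1, h0, Finset.filter_empty, Finset.card_empty] at h1
    omega
  have hpos := Finset.card_pos.2 hne
  rcases cls hq h hP hne (by omega) with ⟨a, ha, h1, h2⟩ | ⟨a, ha, c, hc, h1, h2, h3⟩
  · exact caseA hq h hP ha h1 h2 hb
  exfalso
  -- the structure at every point
  have hall : ∀ R ∈ C, ∃ a ∈ planes R D, ∃ b ∈ planes R D, a ≠ b ∧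
      tng C R D ⊆ cov R a ∪ cov R b := by
    intro R hR
    have htR := h.card_t hR
    rcases cls hq h hR (Finset.card_pos.1 (by omega)) (by omega) with
      ⟨a', _, h1', h2'⟩ | ⟨a', ha', c', hc', h1', h2', h3'⟩
    · omega
    · exact ⟨a', ha', c', hc', h1', h2'⟩
  have hle := Finset.card_le_card h2
  rw [card_two (h.cap.pt P hP) h.fr ha hc h1] at hle
  rcases (show (tng C P D).card = 2 * Fintype.card F + 1 ∨
      (tng C P D).card = 2 * Fintype.card F by omega) with ht | ht
  · have hB : ∀ R ∈ C, (pw C D R (Fintype.card F + 1)).card = Fintype.card F - 1 := by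
      intro R hR
      obtain ⟨a', ha', b', hb'', hab, hs⟩ := hall R hR
      have htR := h.card_t hR
      have e := Finset.eq_of_subset_of_card_le hs
        (by rw [card_two (h.cap.pt R hR) h.fr ha' hb'' hab]; omega)
      have := caseB hq h hR ha' hb'' hab e
      omega
    have hd := dvd_count h (Fintype.card F + 1) (Fintype.card F - 1) hB
    exact arithB _ _ _ hq (by omega) (by omega) hd
  · have hX : ∀ R ∈ C, ((pw C D R (Fintype.card F + 2)).card + 1 = Fintype.card F ∧
        ∀ E ∈ C, (pw C D E (Fintype.card F + 2)).Nonempty) ∨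
        ((pw C D R (Fintype.card F + 1)).card + 1 = 2 * Fintype.card F ∧
          pw C D R (Fintype.card F + 2) = ∅) := by
      intro R hR
      obtain ⟨a', ha', b', hb'', hab, hs⟩ := hall R hR
      have htR := h.card_t hR
      have hc2 := card_two (h.cap.pt R hR) h.fr ha' hb'' hab
      have hsd := Finset.card_sdiff_add_card_eq_card hs
      obtain ⟨X, hX⟩ := Finset.card_eq_one.1
        (show ((cov R a' ∪ cov R b') \ tng C R D).card = 1 by omega)
      have e : tng C R D = (cov R a' ∪ cov R b').erase X := by
        ext l
        have hl : l ∈ (cov R a' ∪ cov R b') \ tng C R D ↔ l = X := by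
          rw [hX, Finset.mem_singleton]
        rw [Finset.mem_sdiff] at hl
        rw [Finset.mem_erase]
        have := @hs l
        tauto
      have hXm : X ∈ cov R a' ∪ cov R b' := by
        have : X ∈ (cov R a' ∪ cov R b') \ tng C R D := by rw [hX]; simp
        exact (Finset.mem_sdiff.1 this).1
      by_cases hXo : X = a' ⊓ b'
      · left
        rw [hXo] at e
        exact caseI hq h hR ha' hb'' hab e
      · right
        rcases Finset.mem_union.1 hXm with hXa | hXb
        · exact caseII hq h hR ha' hb'' hab hXa hXo e
        · rw [Finset.union_comm] at e
          rw [inf_comm] at hXo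
          exact caseII hq h hR hb'' ha' hab.symm hXb hXo e
    by_cases hI : ∃ R ∈ C, ∀ E ∈ C, (pw C D E (Fintype.card F + 2)).Nonempty
    · obtain ⟨R, hR, hE⟩ := hI
      have hd := dvd_count h (Fintype.card F + 2) (Fintype.card F - 1) (by
        intro E hEC
        rcases hX E hEC with h4 | h4
        · have := h4.1
          change (pw C D E (Fintype.card F + 2)).card = _
          omega
        · have := hE E hEC
          rw [h4.2] at this
          simp at this)
      exact arithI _ _ _ hq (by omega) (by omega) hd
    · have hd := dvd_count h (Fintype.card F + 1) (2 * Fintype.card F - 1) (by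
        intro E hEC
        rcases hX E hEC with h4 | h4
        · exact absurd ⟨E, hEC, h4.2⟩ hI
        · have := h4.1
          change (pw C D E (Fintype.card F + 1)).card = _
          omega)
      exact arithII _ _ _ hq (by omega) (by omega) hd

end Solid3
end CapAux

namespace CapAux
section Main4
open scoped Classical
set_option linter.unusedSectionVars false

variable {F V : Type*} [Field F] [Fintype F] [AddCommGroup V] [Module F V] [Finite V]

variable {C : Finset (Submodule F V)} {D P a b : Submodule F V}

lemma cap_insert (hC : Cap C) {N : Submodule F V} (hN1 : finrank F N = 1)
    (h : ∀ A ∈ C, ∀ B ∈ C, A ≠ B → ¬ N ≤ A ⊔ B) : Cap (insert N C) := by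
  constructor
  · intro P hP
    rcases Finset.mem_insert.1 hP with rfl | hP
    · exact hN1
    · exact hC.pt P hP
  · intro P hP Q hQ R hR hPQ hPR hQR hle
    rw [Finset.mem_insert] at hP hQ hR
    rcases hR with rfl | hR
    · rcases hP with rfl | hP
      · exact hPR rfl
      rcases hQ with rfl | hQ
      · exact hQR rfl
      exact h P hP Q hQ hPQ hle
    · rcases hP with rfl | hP
      · rcases hQ with rfl | hQ
        · exact hPQ rfl
        refine h Q hQ R hR hQR ?_
        exact exch (hC.pt Q hQ) hN1 (hC.pt R hR) hQR.symm (by rw [sup_comm]; exact hle)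
      · rcases hQ with rfl | hQ
        · exact h P hP R hR hPR (exch (hC.pt P hP) hN1 (hC.pt R hR) hPR.symm hle)
        · exact hC.nc P hP Q hQ R hR hPQ hPR hQR hle

lemma exists_ext (hC : Cap C) (hD : finrank F D = 4) (hle : ∀ P ∈ C, P ≤ D) :
    ∃ C', C ⊆ C' ∧ SolidCap C' D := by
  have : Finite (Finset (Submodule F V)) := inferInstance
  obtain ⟨C', h1, h2⟩ := (Set.toFinite {S : Finset (Submodule F V) | Cap S ∧ ∀ P ∈ S, P ≤ D}).exists_le_maximal
    (a := C) ⟨hC, hle⟩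
  refine ⟨C', h1, h2.1.1, hD, h2.1.2, ?_⟩
  intro N hN1 hND hNC
  by_contra hcon
  push Not at hcon
  have h3 := h2.2 (y := insert N C') ⟨cap_insert h2.1.1 hN1 hcon, by
    intro P hP
    rcases Finset.mem_insert.1 hP with rfl | hP
    · exact hND
    · exact h2.1.2 P hP⟩ (Finset.subset_insert _ _)
  exact hNC (h3 (Finset.mem_insert_self _ _))

lemma exc [CharP F 2] (hq : 2048 ≤ Fintype.card F) (hC : Cap C) {p : Submodule F V}
    (hp : finrank F p = 3) (hpq : (sec C p).card = Fintype.card F)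
    (hD : D ∈ cov p ⊤) (hm : Fintype.card F ^ 2 + 22 ≤ (sec C D).card + 2 * Fintype.card F) :
    ∃ N : Submodule F V, finrank F N = 1 ∧ N ≤ p ∧ N ∉ C ∧ sec C D ⊆ jn C N := by
  have hD' := mem_cov.1 hD
  obtain ⟨C', h1, h2⟩ := exists_ext (D := D) (hC.mono (sec_subset C D)) (by omega)
    (fun P hP => (mem_sec.1 hP).2)
  have hc := Finset.card_le_card h1
  obtain ⟨P, hP⟩ : (sec C p).Nonempty := Finset.card_pos.1 (by omega)
  have hP' := mem_sec.1 hP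
  have hsub : sec C p ⊆ sec C' p := by
    intro R hR
    rw [mem_sec] at hR
    exact mem_sec.2 ⟨h1 (mem_sec.2 ⟨hR.1, hR.2.trans hD'.1⟩), hR.2⟩
  have hne := solid hq h2 (by omega) (h1 (mem_sec.2 ⟨hP'.1, hP'.2.trans hD'.1⟩))
    (mem_planes.2 ⟨hP'.2, hD'.1, hp⟩)
  obtain ⟨N, hN, hNC⟩ : ∃ N ∈ sec C' p, N ∉ sec C p := by
    by_contra hcon
    push Not at hcon
    exact hne ((congrArg Finset.card (Finset.Subset.antisymm hcon hsub)).trans hpq)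
  rw [mem_sec] at hN
  have hNC' : N ∉ C := fun h => hNC (mem_sec.2 ⟨h, hN.2⟩)
  refine ⟨N, h2.cap.pt N hN.1, hN.2, hNC', ?_⟩
  intro R hR
  have hR' := mem_sec.1 hR
  refine mem_jn.2 ⟨hR'.1, fun S hS hSR hle => ?_⟩
  have hSD : S ∈ C' := h1 (mem_sec.2 ⟨hS, hle.trans (sup_le hR'.2 (hN.2.trans hD'.1))⟩)
  exact h2.cap.nc R (h1 hR) N hN.1 S hSD (fun h => hNC' (h ▸ hR'.1)) hSR.symm
    (fun h => hNC' (h ▸ hS)) hle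

theorem main4 [CharP F 2] (hq : 2048 ≤ Fintype.card F) (hV : finrank F V = 5) (hC : Cap C)
    (hcomp : ∀ N : Submodule F V, finrank F N = 1 → N ∉ C →
      ∃ A ∈ C, ∃ B ∈ C, A ≠ B ∧ N ≤ A ⊔ B)
    (hk : Fintype.card F ^ 3 + 130 * Fintype.card F ≤ C.card + 2 * Fintype.card F ^ 2)
    {p : Submodule F V} (hp : finrank F p = 3) (hpq : (sec C p).card = Fintype.card F) :
    False := by
  have htop : finrank F (⊤ : Submodule F V) = 5 := by rw [finrank_top, hV]
  have hsecT : ∀ S : Finset (Submodule F V), sec S ⊤ = S := by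
    intro S; ext X; rw [mem_sec]; exact ⟨fun h => h.1, fun h => ⟨h, le_top⟩⟩
  have hseg : ∀ N : Submodule F V, finrank F N = 1 → N ∉ C →
      C.card + (jn C N).card ≤ Fintype.card F * (Fintype.card F ^ 2 + Fintype.card F + 1) + 2 := by
    intro N hN1 hNC
    obtain ⟨A, hA, B, hB, hAB, hle⟩ := hcomp N hN1 hNC
    have h1 := segre_sum hC (W := ⊤) hN1 hNC hA hB le_top le_top hAB hle
    rw [hsecT, hsecT, card_cov3 le_top
      (by rw [fr_line (hC.pt A hA) (hC.pt B hB) hAB.symm, htop])] at h1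
    exact h1
  obtain ⟨P, hP, Q, hQ, hPQ⟩ := Finset.one_lt_card.1 (show 1 < (sec C p).card by omega)
  have hP' := mem_sec.1 hP
  have hQ' := mem_sec.1 hQ
  have hP1 := hC.pt P hP'.1
  have hQ1 := hC.pt Q hQ'.1
  have hcovc : (cov p (⊤ : Submodule F V)).card = Fintype.card F + 1 :=
    card_cov2 le_top (by omega)
  -- points outside the plane
  let out : Submodule F V → Finset (Submodule F V) := fun D => (sec C D) \ (sec C p)
  have hout : ∀ D ∈ cov p ⊤, (out D).card + Fintype.card F = (sec C D).card := by
    intro D hD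
    have hs : sec C p ⊆ sec C D := by
      intro R hR
      rw [mem_sec] at hR ⊢
      exact ⟨hR.1, hR.2.trans (mem_cov.1 hD).1⟩
    have := Finset.card_sdiff_add_card_eq_card hs
    rw [hpq] at this
    exact this
  have hfib := fiber (U := p) (W := ⊤) (C \ sec C p) id (by
    intro R hR
    rw [Finset.mem_sdiff, mem_sec] at hR
    exact cov_of_pt (hC.pt R hR.1) le_top le_top (fun h => hR.2 ⟨hR.1, h⟩)) (fun _ => 1)
  simp only [Finset.sum_const, smul_eq_mul, mul_one, id] at hfib
  have hfib2 : (C \ sec C p).card = ∑ D ∈ cov p ⊤, (out D).card := by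
    rw [hfib]
    refine Finset.sum_congr rfl fun D hD => ?_
    congr 1
    ext R
    simp only [out, Finset.mem_filter, Finset.mem_sdiff, mem_sec]
    tauto
  have hCs := Finset.card_sdiff_add_card_eq_card (sec_subset C p)
  have hmax : ∀ D ∈ cov p ⊤, (sec C D).card ≤ Fintype.card F ^ 2 + Fintype.card F + 2 := by
    intro D hD
    have hD' := mem_cov.1 hD
    have h1 := card_tng hC hP'.1 (hP'.2.trans hD'.1)
    rw [card_cov3 (hP'.2.trans hD'.1) (by omega)] at h1
    omega
  let E := (cov p ⊤).filter
    (fun D => Fintype.card F ^ 2 + 22 ≤ (sec C D).card + 2 * Fintype.card F)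
  have hex : ∀ D : Submodule F V, ∃ N : Submodule F V, D ∈ E → finrank F N = 1 ∧ N ≤ p ∧ N ∉ C ∧ sec C D ⊆ jn C N := by
    intro D
    by_cases hD : D ∈ E
    · obtain ⟨N, hN⟩ := exc hq hC hp hpq (Finset.mem_filter.1 hD).1 (Finset.mem_filter.1 hD).2
      exact ⟨N, fun _ => hN⟩
    · exact ⟨⊥, fun h => absurd h hD⟩
  choose n hn using hex
  -- at most four points
  have himg : (E.image n).card ≤ 4 := by
    have hPt := card_tw hC hP'.1 hP'.2 hp
    have hQt := card_tw hC hQ'.1 hQ'.2 hp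
    have h4 : (tng C P p ×ˢ tng C Q p).card = 4 := by
      rw [Finset.card_product, show (tng C P p).card = 2 by omega,
        show (tng C Q p).card = 2 by omega]
    rw [← h4]
    have hmemt : ∀ N ∈ E.image n, ∀ R ∈ sec C p, R ⊔ N ∈ tng C R p := by
      intro N hN R hR
      obtain ⟨D, hD, rfl⟩ := Finset.mem_image.1 hN
      obtain ⟨h1, h2, h3, h4⟩ := hn D hD
      have hR' := mem_sec.1 hR
      have hRD : R ∈ sec C D :=
        mem_sec.2 ⟨hR'.1, hR'.2.trans (mem_cov.1 (Finset.mem_filter.1 hD).1).1⟩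
      refine mem_tng.2 ⟨cov_of_pt h1 hR'.2 h2 ?_, ?_⟩
      · intro h
        have := pt_le_pt (hC.pt R hR'.1) h1 h
        exact h3 (this ▸ hR'.1)
      · intro S hS hle
        by_contra hne
        exact (mem_jn.1 (h4 hRD)).2 S hS hne hle
    refine Finset.card_le_card_of_injOn (fun N => (P ⊔ N, Q ⊔ N)) ?_ ?_
    · intro N hN
      exact Finset.mem_product.2 ⟨hmemt N hN P hP, hmemt N hN Q hQ⟩
    · intro N hN M hM hNM
      simp only [Prod.mk.injEq] at hNM
      have hNt := hmemt N hN P hP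
      obtain ⟨D, hD, rfl⟩ := Finset.mem_image.1 hN
      obtain ⟨D', hD', rfl⟩ := Finset.mem_image.1 hM
      obtain ⟨h1, h2, h3, h4⟩ := hn D hD
      obtain ⟨h1', h2', h3', h4'⟩ := hn D' hD'
      by_contra hne
      have hNP : n D ≠ P := fun h => h3 (h ▸ hP'.1)
      have hNQ : n D ≠ Q := fun h => h3 (h ▸ hQ'.1)
      have hl : finrank F ↥(n D ⊔ n D') = 2 := fr_line h1 h1' (Ne.symm hne)
      have e1 : n D ⊔ n D' = P ⊔ n D := eq_of_le_fr
        (sup_le le_sup_right (hNM.1 ▸ le_sup_right)) (by rw [fr_line hP1 h1 hNP, hl])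
      have e2 : n D ⊔ n D' = Q ⊔ n D := eq_of_le_fr
        (sup_le le_sup_right (hNM.2 ▸ le_sup_right)) (by rw [fr_line hQ1 h1 hNQ, hl])
      have hQl : Q ≤ P ⊔ n D := by rw [← e1, e2]; exact le_sup_left
      exact hPQ ((mem_tng.1 hNt).2 Q hQ'.1 hQl).symm
  -- at most two solids per point
  have hfibre : ∀ N ∈ E.image n, (E.filter (fun D => n D = N)).card ≤ 2 := by
    intro N hN
    by_contra hcon
    push Not at hcon
    obtain ⟨D₀, hD₀, rfl⟩ := Finset.mem_image.1 hN
    have hs := hseg (n D₀) (hn D₀ hD₀).1 (hn D₀ hD₀).2.2.1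
    have hsub : (E.filter (fun D => n D = n D₀)).biUnion out ⊆ jn C (n D₀) := by
      intro R hR
      obtain ⟨D, hD, hRD⟩ := Finset.mem_biUnion.1 hR
      rw [Finset.mem_filter] at hD
      have := (hn D hD.1).2.2.2
      rw [hD.2] at this
      exact this (Finset.mem_sdiff.1 hRD).1
    have h1 := Finset.card_le_card hsub
    rw [Finset.card_biUnion (by
      intro D hD D' hD' hne
      rw [Finset.mem_coe] at hD hD'
      change Disjoint (out D) (out D')
      rw [Finset.disjoint_left]
      intro R hR hR'
      rw [Finset.mem_sdiff, mem_sec, mem_sec] at hR hR'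
      have c := mem_cov.1 (Finset.mem_filter.1 (Finset.mem_filter.1 hD).1).1
      have c' := mem_cov.1 (Finset.mem_filter.1 (Finset.mem_filter.1 hD').1).1
      have hRp : ¬ R ≤ p := fun h => hR.2 ⟨hR.1.1, h⟩
      apply hne
      have hR1 := hC.pt R hR.1.1
      have f := fr_sup_pt hR1 hRp
      exact (eq_of_le_fr (sup_le c.1 hR.1.2) (by omega)).symm.trans
        (eq_of_le_fr (sup_le c'.1 hR'.1.2) (by omega)))] at h1
    have h2 := Finset.card_nsmul_le_sum (E.filter (fun D => n D = n D₀)) (fun D => (out D).card)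
      (Fintype.card F ^ 2 + 22 - 3 * Fintype.card F) (by
        intro D hD
        have hE := Finset.mem_filter.1 (Finset.mem_filter.1 hD).1
        have := hout D hE.1
        have := hE.2
        change _ ≤ (out D).card
        omega)
    rw [smul_eq_mul] at h2
    have h3 : 3 * (Fintype.card F ^ 2 + 22 - 3 * Fintype.card F) ≤ (jn C (n D₀)).card :=
      (Nat.mul_le_mul_right _ hcon).trans (h2.trans h1)
    have h4 : Fintype.card F * (Fintype.card F ^ 2 + Fintype.card F + 1) =
      Fintype.card F ^ 3 + Fintype.card F ^ 2 + Fintype.card F := by ring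
    omega
  have hE8 : E.card ≤ 8 := by
    have := Finset.card_le_mul_card_image (f := n) E 2 hfibre
    omega
  have hsum : ∑ D ∈ cov p ⊤, ((out D).card + 3 * Fintype.card F) ≤
      ∑ D ∈ cov p ⊤, ((Fintype.card F ^ 2 + 21) + if D ∈ E then 3 * Fintype.card F else 0) := by
    refine Finset.sum_le_sum fun D hD => ?_
    have h1 := hout D hD
    have h2 := hmax D hD
    split_ifs with hDE
    · omega
    · have : ¬ (Fintype.card F ^ 2 + 22 ≤ (sec C D).card + 2 * Fintype.card F) :=
        fun h => hDE (Finset.mem_filter.2 ⟨hD, h⟩)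
      omega
  rw [Finset.sum_add_distrib, Finset.sum_add_distrib, ← hfib2, Finset.sum_const, Finset.sum_const,
    ← Finset.sum_filter, Finset.sum_const, hcovc, smul_eq_mul, smul_eq_mul, smul_eq_mul] at hsum
  have hEe : ((cov p ⊤).filter (fun D => D ∈ E)).card ≤ 8 := by
    refine le_trans (Finset.card_le_card ?_) hE8
    intro D hD
    exact (Finset.mem_filter.1 hD).2
  have hE3 := Nat.mul_le_mul_right (3 * Fintype.card F) hEe
  have e1 : (Fintype.card F + 1) * (3 * Fintype.card F) =
    3 * Fintype.card F ^ 2 + 3 * Fintype.card F := by ring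
  have e2 : (Fintype.card F + 1) * (Fintype.card F ^ 2 + 21) =
    Fintype.card F ^ 3 + Fintype.card F ^ 2 + 21 * Fintype.card F + 21 := by ring
  omega

end Main4
end CapAux

theorem stmt2 (F : Type*) [Field F] [Fintype F] (q : ℕ) (hcard : Fintype.card F = q)
    (hqeven : Even q) (hq : 2048 ≤ q)
    (K : Set (PGPoint F 4)) (hK : IsCompleteCap K)
    (hk : (q : ℝ) ^ 3 - 2 * (q : ℝ) ^ 2 + 3 * (q : ℝ) * Real.sqrt q + 8 * (q : ℝ) - 9 * Real.sqrt q - 6 ≤ (K.ncard : ℝ)) :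
    ¬ ∃ W : Submodule F (Fin 5 → F), Module.finrank F W = 3 ∧
      (ptsIn W ∩ K).ncard = q := by
  subst hcard
  rintro ⟨W, hW, hWq⟩
  classical
  have hchar : CharP F 2 := by
    have h2 : ringChar F = 2 := FiniteField.even_card_iff_char_two.2 (Nat.even_iff.1 hqeven)
    exact ringChar.of_eq h2
  have hinj : Function.Injective (Projectivization.submodule : PGPoint F 4 → _) :=
    Projectivization.submodule_injective
  have hfr : ∀ P : PGPoint F 4, finrank F P.submodule = 1 := fun P => P.finrank_submodule
  have hKf : K.Finite := Set.toFinite K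
  let C : Finset (Submodule F (Fin 5 → F)) := hKf.toFinset.image Projectivization.submodule
  have hmem : ∀ P : PGPoint F 4, P.submodule ∈ C ↔ P ∈ K := by
    intro P
    constructor
    · intro h
      obtain ⟨Q, hQ, hQP⟩ := Finset.mem_image.1 h
      rw [← hinj hQP]
      exact hKf.mem_toFinset.1 hQ
    · intro h
      exact Finset.mem_image_of_mem _ (hKf.mem_toFinset.2 h)
  have hC' : ∀ X ∈ C, ∃ P ∈ K, P.submodule = X := by
    intro X hX
    obtain ⟨Q, hQ, hQP⟩ := Finset.mem_image.1 hX
    exact ⟨Q, hKf.mem_toFinset.1 hQ, hQP⟩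
  have hcoll : ∀ P Q R : PGPoint F 4, P ≠ Q →
      (Coll3 P Q R ↔ R.submodule ≤ P.submodule ⊔ Q.submodule) := by
    intro P Q R hPQ
    have hl := CapAux.fr_line (hfr P) (hfr Q) (fun h => hPQ (hinj h).symm)
    unfold Coll3
    constructor
    · intro h
      have := CapAux.eq_of_le_fr (le_sup_left :
        P.submodule ⊔ Q.submodule ≤ P.submodule ⊔ Q.submodule ⊔ R.submodule) (by omega)
      rw [this]
      exact le_sup_right
    · intro h
      rw [sup_eq_left.2 h]
      omega
  have hcap : CapAux.Cap C := by
    constructor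
    · intro X hX
      obtain ⟨P, _, rfl⟩ := hC' X hX
      exact hfr P
    · intro X hX Y hY Z hZ hXY hXZ hYZ hle
      obtain ⟨P, hP, rfl⟩ := hC' X hX
      obtain ⟨Q, hQ, rfl⟩ := hC' Y hY
      obtain ⟨R, hR, rfl⟩ := hC' Z hZ
      have hPQ : P ≠ Q := fun h => hXY (by rw [h])
      exact hK.1 P hP Q hQ R hR hPQ (fun h => hXZ (by rw [h])) (fun h => hYZ (by rw [h]))
        ((hcoll P Q R hPQ).2 hle)
  have hcomp : ∀ N : Submodule F (Fin 5 → F), finrank F N = 1 → N ∉ C →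
      ∃ A ∈ C, ∃ B ∈ C, A ≠ B ∧ N ≤ A ⊔ B := by
    intro N hN1 hNC
    by_contra hcon
    push Not at hcon
    have hins := CapAux.cap_insert hcap hN1 hcon
    obtain ⟨v, hv0, hv⟩ := CapAux.exists_rep hN1
    let N' : PGPoint F 4 := Projectivization.mk F v hv0
    have hN' : N'.submodule = N := by rw [hv]; exact Projectivization.submodule_mk v hv0
    have hin : ∀ P ∈ insert N' K, P.submodule ∈ insert N C := by
      intro P hP
      rcases hP with rfl | hP
      · rw [hN']; exact Finset.mem_insert_self _ _
      · exact Finset.mem_insert_of_mem ((hmem P).2 hP)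
    refine hK.2 N' (fun h => hNC (hN' ▸ (hmem N').2 h)) ?_
    intro P hP Q hQ R hR hPQ hPR hQR hc
    exact hins.nc _ (hin P hP) _ (hin Q hQ) _ (hin R hR) (fun h => hPQ (hinj h))
      (fun h => hPR (hinj h)) (fun h => hQR (hinj h)) ((hcoll P Q R hPQ).1 hc)
  have hcardC : C.card = K.ncard := by
    rw [Finset.card_image_of_injective _ hinj, Set.ncard_eq_toFinset_card K hKf]
  have hsec : (CapAux.sec C W).card = Fintype.card F := by
    rw [← hWq, Set.ncard_eq_toFinset_card _ (Set.toFinite (ptsIn W ∩ K)),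
      ← Finset.card_image_of_injective _ hinj]
    congr 1
    ext X
    rw [CapAux.mem_sec]
    constructor
    · rintro ⟨hX, hXW⟩
      obtain ⟨P, hP, rfl⟩ := hC' X hX
      exact Finset.mem_image.2 ⟨P, by rw [Set.Finite.mem_toFinset]; exact ⟨hXW, hP⟩, rfl⟩
    · intro hX
      obtain ⟨P, hP, rfl⟩ := Finset.mem_image.1 hX
      rw [Set.Finite.mem_toFinset] at hP
      exact ⟨(hmem P).2 hP.2, hP.1⟩
  refine CapAux.main4 hq (by simp) hcap hcomp ?_ hW hsec
  rw [hcardC]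
  have hqr : (2048 : ℝ) ≤ (Fintype.card F : ℝ) := by exact_mod_cast hq
  have hs : (45 : ℝ) ≤ Real.sqrt (Fintype.card F) := by
    apply Real.le_sqrt_of_sq_le
    linarith
  have hprod : 0 ≤ (Real.sqrt (Fintype.card F) - 45) * (3 * (Fintype.card F : ℝ) - 9) :=
    mul_nonneg (by linarith) (by linarith)
  have hfin : (Fintype.card F : ℝ) ^ 3 + 130 * (Fintype.card F : ℝ) ≤
      (K.ncard : ℝ) + 2 * (Fintype.card F : ℝ) ^ 2 := by
    nlinarith
  exact_mod_cast hfin
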